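/- arXiv:2209.13440 — 3 statements merged into one kernel-verified Lean document; each statement's English description precedes it below -/
import Mathlib

section
/- Let Φ₁, Φ₂ : ℂⁿ → ℝ be real-quadratic weights with positive definite Levi matrices, with Φ₁(x) < Φ₂(x) for all x ∈ ℂⁿ \ {0}. Let M = 𝐀_{Φ₂}⁻¹𝐀_{Φ₁} and let T be an n×n complex symmetric matrix whose graph {(x, Tx) : x ∈ ℂⁿ} equals the sum of the eigenspaces of M for eigenvalues in the real interval (0,1). Define g_T(x) = exp(πi T x·x). Then 0 < ‖g_T‖_{H_{Φ₁}} < ∞, ‖g_T‖_{H_{Φ₂}} < ∞, and ‖g_T‖_{H_{Φ₂}} / ‖g_T‖_{H_{Φ₁}} = sup{‖f‖_{H_{Φ₂}}/‖f‖_{H_{Φ₁}} : f entire on ℂⁿ, 0 < ‖f‖_{H_{Φ₁}} < ∞}; i.e. the Gaussian g_T witnesses the norm of the embedding H_{Φ₁} → H_{Φ₂}. -/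
open MeasureTheory Real Matrix
open scoped ENNReal ComplexOrder

noncomputable section

/-- Bilinear dot product on ℂⁿ. -/
def dotC {n : ℕ} (x y : Fin n → ℂ) : ℂ := ∑ j, x j * y j

/-- The real-quadratic weight Φ(x) = (1/2)(L x·x̄ + Re(P x·x)). -/
def weight {n : ℕ} (L P : Matrix (Fin n) (Fin n) ℂ) (x : Fin n → ℂ) : ℝ :=
  (1 / 2) * ((dotC (L.mulVec x) (star x)).re + (dotC (P.mulVec x) x).re)

/-- Squared H_Φ norm, valued in [0,∞]. -/
def HPhiNormSq {n : ℕ} (Φ : (Fin n → ℂ) → ℝ) (f : (Fin n → ℂ) → ℂ) : ℝ≥0∞ :=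
  ∫⁻ x, ENNReal.ofReal (‖f x‖ ^ 2 * Real.exp (-4 * π * Φ x))

/-- H_Φ norm, valued in [0,∞]. -/
def HPhiNorm {n : ℕ} (Φ : (Fin n → ℂ) → ℝ) (f : (Fin n → ℂ) → ℂ) : ℝ≥0∞ :=
  HPhiNormSq Φ f ^ (1 / 2 : ℝ)

/-- Entrywise complex conjugate of a matrix. -/
def conjM {m : Type*} (M : Matrix m m ℂ) : Matrix m m ℂ := M.map (starRingEnd ℂ)

/-- The matrix 𝐀_Φ associated with the weight with Levi matrix L and pluriharmonic part P. -/
def Amat {n : ℕ} (L P : Matrix (Fin n) (Fin n) ℂ) :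
    Matrix (Fin n ⊕ Fin n) (Fin n ⊕ Fin n) ℂ :=
  Matrix.fromBlocks (-(conjM L⁻¹ * P)) (Complex.I • conjM L⁻¹)
    (Complex.I • (L - conjM (P * L⁻¹) * P)) (-(conjM (P * L⁻¹)))

/-- Norm of the embedding H_{Φ₁} → H_{Φ₂}. -/
def embedNorm {n : ℕ} (Φ₁ Φ₂ : (Fin n → ℂ) → ℝ) : ℝ≥0∞ :=
  ⨆ f : {f : (Fin n → ℂ) → ℂ //
      Differentiable ℂ f ∧ 0 < HPhiNorm Φ₁ f ∧ HPhiNorm Φ₁ f ≠ ⊤},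
    HPhiNorm Φ₂ f.1 / HPhiNorm Φ₁ f.1

/-- The complex symplectic form on ℂ^{2n}. -/
def symp {n : ℕ} (X Y : Fin n ⊕ Fin n → ℂ) : ℂ :=
  ∑ j, X (Sum.inr j) * Y (Sum.inl j) - ∑ j, Y (Sum.inr j) * X (Sum.inl j)

/-- The phase-space shift S_Y. -/
def shiftOp {n : ℕ} (Y : (Fin n → ℂ) × (Fin n → ℂ)) (f : (Fin n → ℂ) → ℂ)
    (x : Fin n → ℂ) : ℂ :=
  Complex.exp (2 * (π : ℂ) * Complex.I * (-(1 / 2) * dotC Y.1 Y.2 + dotC Y.2 x)) * f (x - Y.1)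

namespace GaussWit
variable {n : ℕ}

/-- The matrix `B` with `-B x` the polarized conjugate variable of `x`. -/
def bM (L P : Matrix (Fin n) (Fin n) ℂ) : Matrix (Fin n) (Fin n) ℂ := Lᵀ⁻¹ * P

/-- The Schur complement of the weight. -/
def gM (L P : Matrix (Fin n) (Fin n) ℂ) : Matrix (Fin n) (Fin n) ℂ := L - Pᴴ * bM L P

theorem conjM_inv_of_isHermitian {L : Matrix (Fin n) (Fin n) ℂ} (hL : L.IsHermitian) :
    conjM L⁻¹ = Lᵀ⁻¹ := by
  have h : conjM L⁻¹ = (L⁻¹)ᴴᵀ := by ext i j; simp [conjM]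
  rw [h, hL.inv.eq, transpose_nonsing_inv]

theorem conjM_of_isSymm {P : Matrix (Fin n) (Fin n) ℂ} (hP : P.IsSymm) : conjM P = Pᴴ := by
  ext i j; simp [conjM, conjTranspose_apply, hP.apply i j]

theorem conjM_mul (A B : Matrix (Fin n) (Fin n) ℂ) : conjM (A * B) = conjM A * conjM B := by
  simp [conjM, Matrix.map_mul]

theorem Amat_mulVec_graph {L P T : Matrix (Fin n) (Fin n) ℂ} (hL : L.IsHermitian)
    (hP : P.IsSymm) (x : Fin n → ℂ) :
    Amat L P *ᵥ Sum.elim x (T *ᵥ x) =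
      Sum.elim (-(bM L (P - Complex.I • T) *ᵥ x))
        (Complex.I • (gM L (P - Complex.I • T) *ᵥ x) - Tᴴ *ᵥ (bM L (P - Complex.I • T) *ᵥ x)) := by
  rw [Amat, fromBlocks_mulVec, conjM_mul, conjM_inv_of_isHermitian hL, conjM_of_isSymm hP]
  congr 1
  · simp [Function.comp_def, bM, mul_sub, sub_mulVec, smul_mulVec, neg_mulVec]
    abel
  · simp only [Sum.elim_comp_inl, Sum.elim_comp_inr, gM, bM, conjTranspose_sub,
      conjTranspose_smul, mul_sub, sub_mul, sub_mulVec, smul_mulVec, mulVec_smul, mulVec_sub,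
      mulVec_mulVec, smul_mul_assoc, mul_smul_comm, smul_sub, smul_smul, mul_assoc]
    simp only [RCLike.star_def, Complex.conj_I, mul_neg, neg_smul, neg_mul,
      Complex.I_mul_I, mul_one, one_smul, neg_neg, neg_mulVec, mul_assoc]
    abel

theorem sesq_star (A : Matrix (Fin n) (Fin n) ℂ) (x y : Fin n → ℂ) :
    star (star x ⬝ᵥ A *ᵥ y) = star y ⬝ᵥ Aᴴ *ᵥ x := by
  rw [← star_dotProduct_star, star_star, star_mulVec, dotProduct_mulVec]

theorem dotProduct_mulVec_transpose (A : Matrix (Fin n) (Fin n) ℂ) (x y : Fin n → ℂ) :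
    x ⬝ᵥ A *ᵥ y = y ⬝ᵥ Aᵀ *ᵥ x := by
  rw [dotProduct_mulVec, ← mulVec_transpose, dotProduct_comm]

theorem weight_eq (L P : Matrix (Fin n) (Fin n) ℂ) (x : Fin n → ℂ) :
    weight L P x = (1 / 2) * ((star x ⬝ᵥ L *ᵥ x).re + (x ⬝ᵥ P *ᵥ x).re) := by
  change (1 / 2) * (((L *ᵥ x) ⬝ᵥ star x).re + ((P *ᵥ x) ⬝ᵥ x).re) = _
  rw [dotProduct_comm, dotProduct_comm (P *ᵥ x)]

theorem isHermitian_gM {L P : Matrix (Fin n) (Fin n) ℂ} (hL : L.IsHermitian) :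
    (gM L P).IsHermitian := by
  refine hL.sub ?_
  rw [bM, ← mul_assoc]
  exact isHermitian_conjTranspose_mul_mul P hL.transpose.inv

/-- Polarized weight, with the square completed in the conjugate variable. -/
theorem weight_add_weight {L P : Matrix (Fin n) (Fin n) ℂ} (hL : L.PosDef) (hP : P.IsSymm)
    (v z : Fin n → ℂ) :
    weight L P (v + star z) + weight L P (Complex.I • (v - star z)) =
      (star v ⬝ᵥ gM L P *ᵥ v).re + (star (z + bM L P *ᵥ v) ⬝ᵥ Lᵀ *ᵥ (z + bM L P *ᵥ v)).re := by
  have hu : IsUnit Lᵀ.det := by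
    rw [det_transpose]; exact (isUnit_iff_isUnit_det _).1 hL.isUnit
  have hLB : Lᵀ *ᵥ (bM L P *ᵥ v) = P *ᵥ v := by
    rw [bM, mulVec_mulVec, ← mul_assoc, mul_nonsing_inv _ hu, one_mul]
  have h1 : star (bM L P *ᵥ v) ⬝ᵥ Lᵀ *ᵥ z = star (star z ⬝ᵥ P *ᵥ v) := by
    rw [← hLB, sesq_star, hL.1.transpose.eq]
  have h2 : star v ⬝ᵥ (Pᴴ * bM L P) *ᵥ v = star (bM L P *ᵥ v) ⬝ᵥ P *ᵥ v := by
    rw [← mulVec_mulVec, dotProduct_mulVec, ← star_mulVec, ← hLB, star_mulVec Lᵀ,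
      hL.1.transpose.eq, ← dotProduct_mulVec]
  have h3 : z ⬝ᵥ L *ᵥ star z = star z ⬝ᵥ Lᵀ *ᵥ z := dotProduct_mulVec_transpose _ _ _
  have h4 : v ⬝ᵥ P *ᵥ star z = star z ⬝ᵥ P *ᵥ v := by
    rw [dotProduct_mulVec_transpose, hP.eq]
  simp only [weight_eq, gM, sub_mulVec, mulVec_add, mulVec_sub, mulVec_smul, star_add, star_sub,
    star_smul, star_star, dotProduct_add, add_dotProduct, dotProduct_sub, sub_dotProduct,
    smul_dotProduct, dotProduct_smul, hLB, h1, h2, h3, h4, Complex.add_re, Complex.sub_re,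
    smul_eq_mul]
  simp
  ring

theorem four_mul_weight {L P : Matrix (Fin n) (Fin n) ℂ} (hL : L.PosDef) (hP : P.IsSymm)
    (v : Fin n → ℂ) : 4 * weight L P v =
      (star v ⬝ᵥ gM L P *ᵥ v).re +
        (star (star v + bM L P *ᵥ v) ⬝ᵥ Lᵀ *ᵥ (star v + bM L P *ᵥ v)).re := by
  rw [← weight_add_weight hL hP]
  simp [weight_eq, mulVec_add]
  ring

theorem gM_pos_of_eigen {L₁ P₁ L₂ P₂ : Matrix (Fin n) (Fin n) ℂ}
    (hL₁ : L₁.PosDef) (hL₂ : L₂.PosDef) (hP₁ : P₁.IsSymm) (hP₂ : P₂.IsSymm)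
    (hlt : ∀ x : Fin n → ℂ, x ≠ 0 → weight L₁ P₁ x < weight L₂ P₂ x)
    {μ : ℝ} (hμ : μ < 1) {v : Fin n → ℂ} (hv : v ≠ 0)
    (hG : gM L₁ P₁ *ᵥ v = (μ : ℂ) • (gM L₂ P₂ *ᵥ v)) :
    0 < (star v ⬝ᵥ gM L₂ P₂ *ᵥ v).re := by
  have hle : ∀ x : Fin n → ℂ, weight L₁ P₁ x ≤ weight L₂ P₂ x := fun x => by
    by_cases hx : x = 0
    · simp [hx, weight_eq]
    · exact (hlt x hx).le
  set z := -(bM L₂ P₂ *ᵥ v) with hz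
  have e1 := weight_add_weight hL₁ hP₁ v z
  have e2 := weight_add_weight hL₂ hP₂ v z
  have hz0 : z + bM L₂ P₂ *ᵥ v = 0 := by simp [hz]
  rw [hz0] at e2
  simp only [mulVec_zero, dotProduct_zero, Complex.zero_re, add_zero] at e2
  have hnn := hL₁.transpose.posSemidef.re_dotProduct_nonneg (z + bM L₁ P₁ *ᵥ v)
  simp only [RCLike.re_eq_complex_re] at hnn
  rw [hG, dotProduct_smul, smul_eq_mul, Complex.re_ofReal_mul] at e1
  have hstrict : weight L₁ P₁ (v + star z) + weight L₁ P₁ (Complex.I • (v - star z)) <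
      weight L₂ P₂ (v + star z) + weight L₂ P₂ (Complex.I • (v - star z)) := by
    by_cases ha : v + star z = 0
    · refine add_lt_add_of_le_of_lt (hle _) (hlt _ ?_)
      intro hb
      have hb' : v - star z = 0 := (smul_eq_zero.1 hb).resolve_left Complex.I_ne_zero
      apply hv
      have : (2 : ℂ) • v = 0 := by
        rw [two_smul]
        calc v + v = (v + star z) + (v - star z) := by abel
          _ = 0 := by rw [ha, hb', add_zero]
      exact (smul_eq_zero.1 this).resolve_left two_ne_zero
    · exact add_lt_add_of_lt_of_le (hlt _ ha) (hle _)
  nlinarith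

theorem posDef_of_re_pos {A : Matrix (Fin n) (Fin n) ℂ} (hA : A.IsHermitian)
    (h : ∀ x : Fin n → ℂ, x ≠ 0 → 0 < (star x ⬝ᵥ A *ᵥ x).re) : A.PosDef := by
  refine PosDef.of_dotProduct_mulVec_pos hA fun x hx => ?_
  rw [Complex.lt_def]
  exact ⟨by simpa using h x hx, by simpa using (hA.im_star_dotProduct_mulVec_self x).symm⟩

/-- Simultaneous spectral decomposition of `B₁, G₁` relative to `B₂, G₂` with relative
eigenvalues in `(0, 1)`. -/
def RelDecomp (B₁ G₁ B₂ G₂ : Matrix (Fin n) (Fin n) ℂ) : Prop :=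
  ∀ x : Fin n → ℂ, ∃ (s : Finset (Set.Ioo (0 : ℝ) 1)) (v : Set.Ioo (0 : ℝ) 1 → Fin n → ℂ),
    (∀ μ, B₁ *ᵥ v μ = ((μ : ℝ) : ℂ) • (B₂ *ᵥ v μ) ∧
      G₁ *ᵥ v μ = ((μ : ℝ) : ℂ) • (G₂ *ᵥ v μ)) ∧ x = ∑ μ ∈ s, v μ

theorem relDecomp_of_graph {L₁ P₁ L₂ P₂ T : Matrix (Fin n) (Fin n) ℂ}
    (hL₁ : L₁.PosDef) (hL₂ : L₂.PosDef) (hP₁ : P₁.IsSymm) (hP₂ : P₂.IsSymm)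
    (hgraph : (Set.range fun x : Fin n → ℂ => Sum.elim x (T.mulVec x)) =
        ↑(⨆ μ ∈ Set.Ioo (0 : ℝ) 1,
          Module.End.eigenspace
            (Matrix.toLin' ((Amat L₂ P₂)⁻¹ * Amat L₁ P₁)) (μ : ℂ))) :
    RelDecomp (bM L₁ (P₁ - Complex.I • T)) (gM L₁ (P₁ - Complex.I • T))
      (bM L₂ (P₂ - Complex.I • T)) (gM L₂ (P₂ - Complex.I • T)) := by
  intro x
  have hx : Sum.elim x (T *ᵥ x) ∈ (⨆ μ ∈ Set.Ioo (0 : ℝ) 1, Module.End.eigenspace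
      (Matrix.toLin' ((Amat L₂ P₂)⁻¹ * Amat L₁ P₁)) (μ : ℂ)) := by
    rw [← SetLike.mem_coe, ← hgraph]; exact ⟨x, rfl⟩
  rw [iSup_subtype', Submodule.mem_iSup_iff_exists_finsupp] at hx
  obtain ⟨f, hf, hsum⟩ := hx
  refine ⟨f.support, fun μ => f μ ∘ Sum.inl, fun μ => ?_, ?_⟩
  · have hmem : f μ ∈ Set.range fun x : Fin n → ℂ => Sum.elim x (T.mulVec x) := by
      rw [hgraph]
      exact Submodule.mem_iSup_of_mem μ.1 (Submodule.mem_iSup_of_mem μ.2 (hf μ))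
    obtain ⟨v, hv⟩ := hmem
    have hE := Module.End.mem_eigenspace_iff.1 (hf μ)
    rw [toLin'_apply] at hE
    have hA : Amat L₁ P₁ *ᵥ f μ = ((μ : ℝ) : ℂ) • (Amat L₂ P₂ *ᵥ f μ) := by
      by_cases hu : IsUnit (Amat L₂ P₂).det
      · rw [← mulVec_smul, ← hE, mulVec_mulVec, ← mul_assoc, mul_nonsing_inv _ hu, one_mul]
      · rw [nonsing_inv_apply_not_isUnit _ hu, zero_mul, zero_mulVec] at hE
        have h0 : f μ = 0 := (smul_eq_zero.1 hE.symm).resolve_left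
          (by exact_mod_cast μ.2.1.ne')
        simp [h0]
    have hinl : f μ ∘ Sum.inl = v := by rw [← hv]; rfl
    rw [← hv] at hA
    simp only [hinl]
    rw [Amat_mulVec_graph hL₁.1 hP₁, Amat_mulVec_graph hL₂.1 hP₂] at hA
    have hB : bM L₁ (P₁ - Complex.I • T) *ᵥ v =
        ((μ : ℝ) : ℂ) • (bM L₂ (P₂ - Complex.I • T) *ᵥ v) := by
      funext i
      simpa using congrFun hA (Sum.inl i)
    refine ⟨hB, ?_⟩
    rw [hB] at hA
    funext i
    have h := congrFun hA (Sum.inr i)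
    simp only [mulVec_smul, Sum.elim_inr, Pi.sub_apply, Pi.smul_apply, smul_eq_mul] at h
    simp only [Pi.smul_apply, smul_eq_mul]
    apply mul_left_cancel₀ Complex.I_ne_zero
    linear_combination h
  · funext i
    have h := congrFun hsum (Sum.inl i)
    rw [Finsupp.sum, Finset.sum_apply] at h
    simpa using h.symm

variable {L₁ P₁ L₂ P₂ : Matrix (Fin n) (Fin n) ℂ}

theorem gM_orthogonal (hL₁ : L₁.PosDef) (hL₂ : L₂.PosDef) {μ ν : ℝ} (hne : μ ≠ ν)
    {v w : Fin n → ℂ} (hv : gM L₁ P₁ *ᵥ v = (μ : ℂ) • (gM L₂ P₂ *ᵥ v))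
    (hw : gM L₁ P₁ *ᵥ w = (ν : ℂ) • (gM L₂ P₂ *ᵥ w)) :
    star v ⬝ᵥ gM L₂ P₂ *ᵥ w = 0 := by
  have h1 : star v ⬝ᵥ gM L₁ P₁ *ᵥ w = (ν : ℂ) * (star v ⬝ᵥ gM L₂ P₂ *ᵥ w) := by
    rw [hw, dotProduct_smul, smul_eq_mul]
  have h2 : star v ⬝ᵥ gM L₁ P₁ *ᵥ w = (μ : ℂ) * (star v ⬝ᵥ gM L₂ P₂ *ᵥ w) := by
    have e := sesq_star (gM L₁ P₁) w v
    rw [(isHermitian_gM hL₁.1).eq, hv, dotProduct_smul, smul_eq_mul, star_mul', sesq_star,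
      (isHermitian_gM hL₂.1).eq] at e
    rw [← e]; simp
  have h3 : ((μ : ℂ) - ν) * (star v ⬝ᵥ gM L₂ P₂ *ᵥ w) = 0 := by linear_combination h1 - h2
  exact (mul_eq_zero.1 h3).resolve_left (sub_ne_zero.2 (by exact_mod_cast hne))

theorem weighted_gM_pos (hL₁ : L₁.PosDef) (hL₂ : L₂.PosDef) (hP₁ : P₁.IsSymm) (hP₂ : P₂.IsSymm)
    (hlt : ∀ x : Fin n → ℂ, x ≠ 0 → weight L₁ P₁ x < weight L₂ P₂ x)
    (s : Finset (Set.Ioo (0 : ℝ) 1)) (v : Set.Ioo (0 : ℝ) 1 → Fin n → ℂ)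
    (hv : ∀ μ, gM L₁ P₁ *ᵥ v μ = ((μ : ℝ) : ℂ) • (gM L₂ P₂ *ᵥ v μ))
    (c : Set.Ioo (0 : ℝ) 1 → ℝ) (hc : ∀ μ, 0 < c μ) (hne : ∑ μ ∈ s, v μ ≠ 0) :
    0 < (star (∑ μ ∈ s, v μ) ⬝ᵥ gM L₂ P₂ *ᵥ ∑ μ ∈ s, (c μ : ℂ) • v μ).re := by
  have key : star (∑ μ ∈ s, v μ) ⬝ᵥ gM L₂ P₂ *ᵥ ∑ μ ∈ s, (c μ : ℂ) • v μ =
      ∑ μ ∈ s, (c μ : ℂ) * (star (v μ) ⬝ᵥ gM L₂ P₂ *ᵥ v μ) := by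
    rw [star_sum, sum_dotProduct, mulVec_sum]
    refine Finset.sum_congr rfl fun μ hμ => ?_
    rw [dotProduct_sum, Finset.sum_eq_single μ]
    · rw [mulVec_smul, dotProduct_smul, smul_eq_mul]
    · intro ν _ hν
      rw [mulVec_smul, dotProduct_smul,
        gM_orthogonal hL₁ hL₂ (fun h => hν (Subtype.ext h.symm)) (hv μ) (hv ν), smul_zero]
    · exact fun h => absurd hμ h
  rw [key, Complex.re_sum]
  obtain ⟨μ, hμ, hμ0⟩ := Finset.exists_ne_zero_of_sum_ne_zero hne
  have hpos : ∀ μ, v μ ≠ 0 → 0 < ((c μ : ℂ) * (star (v μ) ⬝ᵥ gM L₂ P₂ *ᵥ v μ)).re :=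
    fun μ h => by
      rw [Complex.re_ofReal_mul]
      exact mul_pos (hc μ) (gM_pos_of_eigen hL₁ hL₂ hP₁ hP₂ hlt μ.2.2 h (hv μ))
  refine Finset.sum_pos' (fun ν _ => ?_) ⟨μ, hμ, hpos μ hμ0⟩
  by_cases h : v ν = 0
  · simp [h]
  · exact (hpos ν h).le

theorem posDef_gM_right (hL₁ : L₁.PosDef) (hL₂ : L₂.PosDef) (hP₁ : P₁.IsSymm) (hP₂ : P₂.IsSymm)
    (hlt : ∀ x : Fin n → ℂ, x ≠ 0 → weight L₁ P₁ x < weight L₂ P₂ x)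
    (hdec : RelDecomp (bM L₁ P₁) (gM L₁ P₁) (bM L₂ P₂) (gM L₂ P₂)) :
    (gM L₂ P₂).PosDef := by
  refine posDef_of_re_pos (isHermitian_gM hL₂.1) fun x hx => ?_
  obtain ⟨s, v, hv, rfl⟩ := hdec x
  simpa using weighted_gM_pos hL₁ hL₂ hP₁ hP₂ hlt s v (fun μ => (hv μ).2) (fun _ => 1)
    (fun _ => one_pos) hx

theorem posDef_gM_left (hL₁ : L₁.PosDef) (hL₂ : L₂.PosDef) (hP₁ : P₁.IsSymm) (hP₂ : P₂.IsSymm)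
    (hlt : ∀ x : Fin n → ℂ, x ≠ 0 → weight L₁ P₁ x < weight L₂ P₂ x)
    (hdec : RelDecomp (bM L₁ P₁) (gM L₁ P₁) (bM L₂ P₂) (gM L₂ P₂)) :
    (gM L₁ P₁).PosDef := by
  refine posDef_of_re_pos (isHermitian_gM hL₁.1) fun x hx => ?_
  obtain ⟨s, v, hv, rfl⟩ := hdec x
  have h : gM L₁ P₁ *ᵥ ∑ μ ∈ s, v μ = gM L₂ P₂ *ᵥ ∑ μ ∈ s, ((μ : ℝ) : ℂ) • v μ := by
    rw [mulVec_sum, mulVec_sum]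
    exact Finset.sum_congr rfl fun μ _ => by rw [(hv μ).2, mulVec_smul]
  rw [h]
  exact weighted_gM_pos hL₁ hL₂ hP₁ hP₂ hlt s v (fun μ => (hv μ).2) (fun μ => μ)
    (fun μ => μ.2.1) hx

theorem inv_gM_mulVec_eigen (hL₁ : L₁.PosDef) (hL₂ : L₂.PosDef) (hP₁ : P₁.IsSymm) (hP₂ : P₂.IsSymm)
    (hlt : ∀ x : Fin n → ℂ, x ≠ 0 → weight L₁ P₁ x < weight L₂ P₂ x)
    (hdec : RelDecomp (bM L₁ P₁) (gM L₁ P₁) (bM L₂ P₂) (gM L₂ P₂))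
    {μ : Set.Ioo (0 : ℝ) 1} {v : Fin n → ℂ}
    (hv : gM L₁ P₁ *ᵥ v = ((μ : ℝ) : ℂ) • (gM L₂ P₂ *ᵥ v)) :
    (gM L₁ P₁)⁻¹ *ᵥ (gM L₂ P₂ *ᵥ v) = (((μ : ℝ)⁻¹ : ℝ) : ℂ) • v := by
  have hu := (isUnit_iff_isUnit_det _).1 (posDef_gM_left hL₁ hL₂ hP₁ hP₂ hlt hdec).isUnit
  have hμ : ((μ : ℝ) : ℂ) ≠ 0 := by exact_mod_cast μ.2.1.ne'
  have h : gM L₂ P₂ *ᵥ v = (((μ : ℝ)⁻¹ : ℝ) : ℂ) • (gM L₁ P₁ *ᵥ v) := by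
    rw [hv, smul_smul, Complex.ofReal_inv, inv_mul_cancel₀ hμ, one_smul]
  rw [h, mulVec_smul, mulVec_mulVec, nonsing_inv_mul _ hu, one_mulVec]

theorem posDef_inv_sub_inv (hL₁ : L₁.PosDef) (hL₂ : L₂.PosDef) (hP₁ : P₁.IsSymm) (hP₂ : P₂.IsSymm)
    (hlt : ∀ x : Fin n → ℂ, x ≠ 0 → weight L₁ P₁ x < weight L₂ P₂ x)
    (hdec : RelDecomp (bM L₁ P₁) (gM L₁ P₁) (bM L₂ P₂) (gM L₂ P₂)) :
    ((gM L₁ P₁)⁻¹ - (gM L₂ P₂)⁻¹).PosDef := by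
  have h₁ := posDef_gM_left hL₁ hL₂ hP₁ hP₂ hlt hdec
  have h₂ := posDef_gM_right hL₁ hL₂ hP₁ hP₂ hlt hdec
  have hu := (isUnit_iff_isUnit_det _).1 h₂.isUnit
  refine posDef_of_re_pos (h₁.inv.1.sub h₂.inv.1) fun w hw => ?_
  obtain ⟨s, v, hv, hx⟩ := hdec ((gM L₂ P₂)⁻¹ *ᵥ w)
  have hwx : w = gM L₂ P₂ *ᵥ ∑ μ ∈ s, v μ := by
    rw [← hx, mulVec_mulVec, mul_nonsing_inv _ hu, one_mulVec]
  have hne : ∑ μ ∈ s, v μ ≠ 0 := fun h => hw (by rw [hwx, h, mulVec_zero])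
  have hy : ((gM L₁ P₁)⁻¹ - (gM L₂ P₂)⁻¹) *ᵥ w =
      ∑ μ ∈ s, (((μ : ℝ)⁻¹ - 1 : ℝ) : ℂ) • v μ := by
    rw [sub_mulVec, hx]
    rw [hwx, mulVec_sum, mulVec_sum, ← Finset.sum_sub_distrib]
    refine Finset.sum_congr rfl fun μ _ => ?_
    rw [inv_gM_mulVec_eigen hL₁ hL₂ hP₁ hP₂ hlt hdec (hv μ).2, Complex.ofReal_sub, sub_smul]
    simp
  rw [hy, hwx, star_mulVec, h₂.1.eq, ← dotProduct_mulVec]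
  exact weighted_gM_pos hL₁ hL₂ hP₁ hP₂ hlt s v (fun μ => (hv μ).2) (fun μ => (μ : ℝ)⁻¹ - 1)
    (fun μ => sub_pos.2 ((one_lt_inv₀ μ.2.1).2 μ.2.2)) hne

/-- The two Gaussians have the same pseudo-covariance. -/
theorem inv_gM_mul_bM_eq (hL₁ : L₁.PosDef) (hL₂ : L₂.PosDef) (hP₁ : P₁.IsSymm) (hP₂ : P₂.IsSymm)
    (hlt : ∀ x : Fin n → ℂ, x ≠ 0 → weight L₁ P₁ x < weight L₂ P₂ x)
    (hdec : RelDecomp (bM L₁ P₁) (gM L₁ P₁) (bM L₂ P₂) (gM L₂ P₂)) :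
    (gM L₁ P₁)⁻¹ * (bM L₁ P₁)ᴴ = (gM L₂ P₂)⁻¹ * (bM L₂ P₂)ᴴ := by
  have h₁ := posDef_gM_left hL₁ hL₂ hP₁ hP₂ hlt hdec
  have h₂ := posDef_gM_right hL₁ hL₂ hP₁ hP₂ hlt hdec
  have hu := (isUnit_iff_isUnit_det _).1 h₂.isUnit
  have h : bM L₁ P₁ * (gM L₁ P₁)⁻¹ * gM L₂ P₂ = bM L₂ P₂ := by
    refine Matrix.toLin'.injective (LinearMap.ext fun x => ?_)
    obtain ⟨s, v, hv, rfl⟩ := hdec x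
    rw [map_sum, map_sum]
    refine Finset.sum_congr rfl fun μ _ => ?_
    have hμ : ((μ : ℝ) : ℂ) ≠ 0 := by exact_mod_cast μ.2.1.ne'
    rw [toLin'_apply, toLin'_apply, ← mulVec_mulVec, ← mulVec_mulVec,
      inv_gM_mulVec_eigen hL₁ hL₂ hP₁ hP₂ hlt hdec (hv μ).2, mulVec_smul, (hv μ).1, smul_smul,
      Complex.ofReal_inv, inv_mul_cancel₀ hμ, one_smul]
  have h' : bM L₁ P₁ * (gM L₁ P₁)⁻¹ = bM L₂ P₂ * (gM L₂ P₂)⁻¹ := by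
    rw [← h, mul_assoc _ (gM L₂ P₂), mul_nonsing_inv _ hu, mul_one]
  have h'' := congrArg conjTranspose h'
  rwa [conjTranspose_mul, conjTranspose_mul, h₁.inv.1.eq, h₂.inv.1.eq] at h''

theorem weight_pos {L P : Matrix (Fin n) (Fin n) ℂ} (hL : L.PosDef) (hP : P.IsSymm)
    (hG : (gM L P).PosDef) {x : Fin n → ℂ} (hx : x ≠ 0) : 0 < weight L P x := by
  have h := four_mul_weight hL hP x
  have h1 := hG.re_dotProduct_pos hx
  have h2 := hL.transpose.posSemidef.re_dotProduct_nonneg (star x + bM L P *ᵥ x)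
  simp only [RCLike.re_eq_complex_re] at h1 h2
  linarith

/-- The real gradient of the weight, `x ↦ L x + P̄ x̄`. -/
def zeta (L P : Matrix (Fin n) (Fin n) ℂ) : (Fin n → ℂ) →ₗ[ℝ] (Fin n → ℂ) where
  toFun x := L *ᵥ x + Pᴴ *ᵥ star x
  map_add' x y := by simp only [mulVec_add, star_add]; abel
  map_smul' r x := by
    ext i
    simp [mulVec_smul]

/-- The candidate inverse of `zeta`. -/
def zetaInv (L P : Matrix (Fin n) (Fin n) ℂ) : (Fin n → ℂ) →ₗ[ℝ] (Fin n → ℂ) where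
  toFun x := (gM L P)⁻¹ *ᵥ x - ((gM L P)⁻¹ * (bM L P)ᴴ) *ᵥ star x
  map_add' x y := by simp only [mulVec_add, star_add]; abel
  map_smul' r x := by
    ext i
    simp [mulVec_smul, smul_sub]

theorem zeta_apply (L P : Matrix (Fin n) (Fin n) ℂ) (x : Fin n → ℂ) :
    zeta L P x = L *ᵥ x + Pᴴ *ᵥ star x := rfl

theorem zetaInv_apply (L P : Matrix (Fin n) (Fin n) ℂ) (x : Fin n → ℂ) :
    zetaInv L P x = (gM L P)⁻¹ *ᵥ x - ((gM L P)⁻¹ * (bM L P)ᴴ) *ᵥ star x := rfl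

theorem star_mulVec_eq (A : Matrix (Fin n) (Fin n) ℂ) (x : Fin n → ℂ) :
    star (A *ᵥ x) = Aᴴᵀ *ᵥ star x := by
  rw [star_mulVec, mulVec_transpose]

theorem zetaInv_zeta {L P : Matrix (Fin n) (Fin n) ℂ} (hL : L.PosDef) (hP : P.IsSymm)
    (hG : (gM L P).PosDef) (x : Fin n → ℂ) : zetaInv L P (zeta L P x) = x := by
  have hu := (isUnit_iff_isUnit_det _).1 hG.isUnit
  have huL : IsUnit Lᵀ.det := by
    rw [det_transpose]; exact (isUnit_iff_isUnit_det _).1 hL.isUnit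
  have hs : star (zeta L P x) = Lᵀ *ᵥ star x + P *ᵥ x := by
    rw [zeta_apply, star_add, star_mulVec_eq, star_mulVec_eq, hL.1.eq, conjTranspose_conjTranspose,
      star_star, hP.eq]
  have hB : (bM L P)ᴴ = Pᴴ * Lᵀ⁻¹ := by
    rw [bM, conjTranspose_mul, hL.1.transpose.inv.eq]
  rw [zetaInv_apply, hs, zeta_apply, ← mulVec_mulVec, ← mulVec_sub, hB, mulVec_add, mulVec_mulVec,
    mulVec_mulVec, mul_assoc, nonsing_inv_mul _ huL, mul_one,
    add_comm (Pᴴ *ᵥ star x), add_sub_add_right_eq_sub, ← sub_mulVec, mul_assoc]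
  change (gM L P)⁻¹ *ᵥ (gM L P *ᵥ x) = x
  rw [mulVec_mulVec, nonsing_inv_mul _ hu, one_mulVec]

theorem zeta_zetaInv {L P : Matrix (Fin n) (Fin n) ℂ} (hL : L.PosDef) (hP : P.IsSymm)
    (hG : (gM L P).PosDef) (x : Fin n → ℂ) : zeta L P (zetaInv L P x) = x := by
  have h : zetaInv L P ∘ₗ zeta L P = LinearMap.id := LinearMap.ext (zetaInv_zeta hL hP hG)
  exact LinearMap.congr_fun ((LinearMap.comp_eq_id_comm ℝ (Fin n → ℂ)).1 h) x

theorem two_mul_weight (L P : Matrix (Fin n) (Fin n) ℂ) (x : Fin n → ℂ) :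
    2 * weight L P x = (star x ⬝ᵥ zeta L P x).re := by
  have h : star x ⬝ᵥ Pᴴ *ᵥ star x = star (x ⬝ᵥ P *ᵥ x) := by
    have e := sesq_star P (star x) x
    rw [star_star] at e
    rw [e]
  rw [weight_eq, zeta_apply, dotProduct_add, h]
  simp

theorem re_star_dotProduct_zeta_comm {L P : Matrix (Fin n) (Fin n) ℂ} (hL : L.IsHermitian)
    (hP : P.IsSymm) (x y : Fin n → ℂ) :
    (star y ⬝ᵥ zeta L P x).re = (star x ⬝ᵥ zeta L P y).re := by
  have h1 : star y ⬝ᵥ L *ᵥ x = star (star x ⬝ᵥ L *ᵥ y) := by rw [sesq_star, hL.eq]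
  have h2 : star y ⬝ᵥ Pᴴ *ᵥ star x = star x ⬝ᵥ Pᴴ *ᵥ star y := by
    rw [dotProduct_mulVec_transpose, hP.conjTranspose.eq]
  rw [zeta_apply, zeta_apply, dotProduct_add, dotProduct_add, h1, h2]
  simp

/-- Completing the square in the convolution of two Gaussians. -/
theorem weight_convolution {L₁ P₁ L₂ P₂ : Matrix (Fin n) (Fin n) ℂ}
    (hL₁ : L₁.PosDef) (hL₂ : L₂.PosDef) (hP₁ : P₁.IsSymm) (hP₂ : P₂.IsSymm)
    (hG₁ : (gM L₁ P₁).PosDef) (hG₂ : (gM L₂ P₂).PosDef)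
    (hC : ((gM L₁ P₁)⁻¹ - (gM L₂ P₂)⁻¹).PosDef)
    (hB : (gM L₁ P₁)⁻¹ * (bM L₁ P₁)ᴴ = (gM L₂ P₂)⁻¹ * (bM L₂ P₂)ᴴ) :
    ∃ Q : Matrix (Fin n) (Fin n) ℂ, Q.PosDef ∧ ∀ x, ∃ k, ∀ w,
      2 * weight L₂ P₂ (x - w) + (star w ⬝ᵥ Q *ᵥ w).re =
        2 * weight L₁ P₁ x +
          (2 * weight L₂ P₂ (w - k) + (star (w - k) ⬝ᵥ Q *ᵥ (w - k)).re) := by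
  set C := (gM L₁ P₁)⁻¹ - (gM L₂ P₂)⁻¹ with hCdef
  have huC := (isUnit_iff_isUnit_det _).1 hC.isUnit
  refine ⟨C⁻¹, hC.inv, fun x => ⟨C *ᵥ zeta L₁ P₁ x, fun w => ?_⟩⟩
  set k := C *ᵥ zeta L₁ P₁ x with hk
  have hQk : C⁻¹ *ᵥ k = zeta L₁ P₁ x := by
    rw [hk, mulVec_mulVec, nonsing_inv_mul _ huC, one_mulVec]
  have hy : zeta L₂ P₂ (x - k) = zeta L₁ P₁ x := by
    have hxk : x - k = zetaInv L₂ P₂ (zeta L₁ P₁ x) := by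
      nth_rewrite 1 [← zetaInv_zeta hL₁ hP₁ hG₁ x]
      rw [zetaInv_apply, zetaInv_apply, hB, hk, hCdef, sub_mulVec]
      abel
    rw [hxk, zeta_zetaInv hL₂ hP₂ hG₂]
  obtain ⟨u, rfl⟩ : ∃ u, w = u + k := ⟨w - k, by abel⟩
  have hxu : x - (u + k) = (x - k) - u := by abel
  have hsym := re_star_dotProduct_zeta_comm hL₂.1 hP₂ u (x - k)
  have hsymQ : star k ⬝ᵥ C⁻¹ *ᵥ u = star (star u ⬝ᵥ C⁻¹ *ᵥ k) := by
    rw [sesq_star, hC.inv.1.eq]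
  rw [two_mul_weight, two_mul_weight, two_mul_weight, hxu,
    add_sub_cancel_right, map_sub, dotProduct_sub, Complex.sub_re]
  rw [star_sub (x - k) u, sub_dotProduct, sub_dotProduct, Complex.sub_re, Complex.sub_re, hsym, hy,
    star_add, mulVec_add, dotProduct_add, add_dotProduct, add_dotProduct, hsymQ, hQk, star_sub,
    sub_dotProduct]
  simp
  ring

@[fun_prop]
theorem continuous_weight (L P : Matrix (Fin n) (Fin n) ℂ) : Continuous (weight L P) := by
  unfold weight dotC
  fun_prop

theorem weight_smul (L P : Matrix (Fin n) (Fin n) ℂ) (t : ℝ) (x : Fin n → ℂ) :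
    weight L P (t • x) = t ^ 2 * weight L P x := by
  have h : t • x = (t : ℂ) • x := by ext i; simp
  rw [h, weight_eq, weight_eq]
  simp [mulVec_smul, smul_dotProduct, dotProduct_smul]
  ring

theorem lintegral_exp_neg_ne_top {q : (Fin n → ℂ) → ℝ} (hq : Continuous q)
    (hsmul : ∀ (t : ℝ) x, q (t • x) = t ^ 2 * q x) (hpos : ∀ x, x ≠ 0 → 0 < q x) :
    ∫⁻ x, ENNReal.ofReal (Real.exp (-q x)) ≠ ⊤ := by
  obtain ⟨c, hc, hcq⟩ : ∃ c > 0, ∀ x, c * ‖x‖ ^ 2 ≤ q x := by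
    have hnorm : ∀ x : Fin n → ℂ, x ≠ 0 → ‖x‖⁻¹ • x ∈ Metric.sphere (0 : Fin n → ℂ) 1 := by
      intro x hx
      simp [norm_smul, inv_mul_cancel₀ (norm_ne_zero_iff.2 hx)]
    have h0 : q 0 = 0 := by simpa using hsmul 0 0
    rcases (Metric.sphere (0 : Fin n → ℂ) 1).eq_empty_or_nonempty with he | hne
    · refine ⟨1, one_pos, fun x => ?_⟩
      by_cases hx : x = 0
      · simp [hx, h0]
      · exact absurd (hnorm x hx) (by simp [he])
    · obtain ⟨x₀, hx₀, hmin⟩ := (isCompact_sphere (0 : Fin n → ℂ) 1).exists_isMinOn hne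
        hq.continuousOn
      have hx₀0 : x₀ ≠ 0 := by
        rintro rfl
        simp at hx₀
      refine ⟨q x₀, hpos _ hx₀0, fun x => ?_⟩
      by_cases hx : x = 0
      · simp [hx, h0]
      · have h1 : q x₀ ≤ q (‖x‖⁻¹ • x) := hmin (hnorm x hx)
        rw [hsmul] at h1
        have hx' : 0 < ‖x‖ := norm_pos_iff.2 hx
        calc q x₀ * ‖x‖ ^ 2 ≤ (‖x‖⁻¹ ^ 2 * q x) * ‖x‖ ^ 2 := by gcongr
          _ = q x := by field_simp
  set b : ℝ := c / (n + 1) with hb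
  have hb0 : 0 < b := by positivity
  have hbq : ∀ x, ∑ i, b * ‖x i‖ ^ 2 ≤ q x := fun x => by
    refine le_trans ?_ (hcq x)
    calc ∑ i, b * ‖x i‖ ^ 2 ≤ ∑ _i : Fin n, b * ‖x‖ ^ 2 := by
          gcongr with i; exact norm_le_pi_norm x i
      _ = (n * b) * ‖x‖ ^ 2 := by simp; ring
      _ ≤ c * ‖x‖ ^ 2 := by
          gcongr
          rw [hb, mul_div_assoc', div_le_iff₀ (by positivity)]
          nlinarith
  have hone : Integrable (fun z : ℂ => Real.exp (-(b * ‖z‖ ^ 2))) := by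
    have h := (GaussianFourier.integrable_cexp_neg_mul_sq_norm_add (V := ℂ) (b := (b : ℂ))
      (by simpa using hb0) 0 0).norm
    refine h.congr (Filter.Eventually.of_forall fun z => ?_)
    simp [Complex.norm_exp, ← Complex.ofReal_pow]
  have hprod : Integrable (fun x : Fin n → ℂ => ∏ i, Real.exp (-(b * ‖x i‖ ^ 2))) :=
    Integrable.fintype_prod (fun _ => hone)
  refine ne_top_of_le_ne_top hprod.lintegral_lt_top.ne (lintegral_mono fun x => ?_)
  refine ENNReal.ofReal_le_ofReal ?_
  rw [← Real.exp_sum, Real.exp_le_exp, Finset.sum_neg_distrib]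
  exact neg_le_neg (hbq x)

theorem lintegral_exp_neg_ne_zero {q : (Fin n → ℂ) → ℝ} (hq : Continuous q) :
    ∫⁻ x, ENNReal.ofReal (Real.exp (-q x)) ≠ 0 := by
  intro h
  rw [lintegral_eq_zero_iff (by fun_prop)] at h
  obtain ⟨x, hx⟩ := h.exists
  simp only [Pi.zero_apply, ENNReal.ofReal_eq_zero] at hx
  exact absurd hx (not_le.2 (Real.exp_pos _))

theorem measurePreserving_unit_smul {c : ℂ} (hc : ‖c‖ = 1) :
    MeasurePreserving (fun w : Fin n → ℂ => c • w) := by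
  obtain ⟨c, rfl⟩ : ∃ c' : Circle, (c' : ℂ) = c := ⟨⟨c, mem_sphere_zero_iff_norm.2 hc⟩, rfl⟩
  have h : MeasurePreserving (fun z : ℂ => (c : ℂ) * z) := by
    have := (rotation c).measurePreserving
    rwa [funext (rotation_apply c)] at this
  exact volume_preserving_pi (fun _ => h)

/-- Sub-mean value property of `|f|²` on the unit circle. -/
theorem sq_norm_le_lintegral_circle {f : ℂ → ℂ} (hf : Differentiable ℂ f) :
    ENNReal.ofReal (2 * π) * ENNReal.ofReal (‖f 0‖ ^ 2) ≤
      ∫⁻ θ in Set.Ioc 0 (2 * π), ENNReal.ofReal (‖f (circleMap 0 1 θ)‖ ^ 2) := by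
  have hcont : Continuous fun θ : ℝ => f (circleMap 0 1 θ) :=
    hf.continuous.comp (continuous_circleMap 0 1)
  have hmean : circleAverage (fun z => f z ^ 2) 0 1 = f 0 ^ 2 :=
    DiffContOnCl.circleAverage (hf.pow 2).diffContOnCl
  have h2π : (0 : ℝ) ≤ 2 * π := by positivity
  have hle : 2 * π * ‖f 0‖ ^ 2 ≤ ∫ θ in (0 : ℝ)..2 * π, ‖f (circleMap 0 1 θ)‖ ^ 2 := by
    have h1 := intervalIntegral.norm_integral_le_integral_norm (μ := volume)
      (f := fun θ : ℝ => f (circleMap 0 1 θ) ^ 2) h2π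
    have h3 : (2 * π) • f 0 ^ 2 = ∫ θ in (0 : ℝ)..2 * π, f (circleMap 0 1 θ) ^ 2 := by
      rw [← hmean, circleAverage_def, smul_smul, mul_inv_cancel₀ (by positivity), one_smul]
    rw [← h3, norm_smul, Real.norm_of_nonneg h2π, norm_pow] at h1
    simpa using h1
  rw [← ENNReal.ofReal_mul h2π]
  refine (ENNReal.ofReal_le_ofReal hle).trans (le_of_eq ?_)
  rw [intervalIntegral.integral_of_le h2π, ofReal_integral_eq_lintegral_ofReal]
  · exact ((hcont.norm.pow 2).integrableOn_Icc).mono_set Set.Ioc_subset_Icc_self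
  · exact Filter.Eventually.of_forall fun θ => by positivity

/-- Averaging `|h|²` against a circular density increases it. -/
theorem sq_norm_mul_lintegral_le {h : (Fin n → ℂ) → ℂ} (hh : Differentiable ℂ h)
    {ρ : (Fin n → ℂ) → ℝ≥0∞} (hρ : Measurable ρ)
    (hcirc : ∀ (c : ℂ) w, ‖c‖ = 1 → ρ (c • w) = ρ w) (y : Fin n → ℂ) :
    ENNReal.ofReal (‖h y‖ ^ 2) * ∫⁻ w, ρ w ≤ ∫⁻ w, ENNReal.ofReal (‖h (y + w)‖ ^ 2) * ρ w := by
  have hcont := hh.continuous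
  have h2π : ENNReal.ofReal (2 * π) ≠ 0 := by
    simpa using Real.pi_pos
  have hrot : ∀ θ : ℝ, ∫⁻ w, ENNReal.ofReal (‖h (y + circleMap 0 1 θ • w)‖ ^ 2) * ρ w =
      ∫⁻ w, ENNReal.ofReal (‖h (y + w)‖ ^ 2) * ρ w := fun θ => by
    have hc : ‖circleMap 0 1 θ‖ = 1 := by simp
    rw [← (measurePreserving_unit_smul hc).lintegral_comp
      (f := fun w => ENNReal.ofReal (‖h (y + w)‖ ^ 2) * ρ w) (by fun_prop)]
    simp only [hcirc _ _ hc]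
  rw [← ENNReal.mul_le_mul_iff_right h2π ENNReal.ofReal_ne_top]
  calc ENNReal.ofReal (2 * π) * (ENNReal.ofReal (‖h y‖ ^ 2) * ∫⁻ w, ρ w)
      = ∫⁻ w, (ENNReal.ofReal (2 * π) * ENNReal.ofReal (‖h y‖ ^ 2)) * ρ w := by
        rw [lintegral_const_mul _ hρ, mul_assoc]
    _ ≤ ∫⁻ w, (∫⁻ θ in Set.Ioc 0 (2 * π),
          ENNReal.ofReal (‖h (y + circleMap 0 1 θ • w)‖ ^ 2)) * ρ w := by
        refine lintegral_mono fun w => ?_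
        gcongr
        have hd : Differentiable ℂ fun z : ℂ => h (y + z • w) := by fun_prop
        simpa using sq_norm_le_lintegral_circle hd
    _ = ∫⁻ w, ∫⁻ θ in Set.Ioc 0 (2 * π),
          ENNReal.ofReal (‖h (y + circleMap 0 1 θ • w)‖ ^ 2) * ρ w := by
        refine lintegral_congr fun w => ?_
        rw [lintegral_mul_const]
        have := continuous_circleMap 0 1
        fun_prop
    _ = ∫⁻ θ in Set.Ioc 0 (2 * π), ∫⁻ w,
          ENNReal.ofReal (‖h (y + circleMap 0 1 θ • w)‖ ^ 2) * ρ w := by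
        refine lintegral_lintegral_swap (Measurable.aemeasurable ?_)
        have := continuous_circleMap 0 1
        exact (Continuous.measurable (by fun_prop)).ennreal_ofReal.mul (hρ.comp measurable_fst)
    _ = ENNReal.ofReal (2 * π) * ∫⁻ w, ENNReal.ofReal (‖h (y + w)‖ ^ 2) * ρ w := by
        simp only [hrot]
        rw [setLIntegral_const, Real.volume_Ioc, sub_zero, mul_comm]

theorem HPhiNormSq_eq (L P : Matrix (Fin n) (Fin n) ℂ) (f : (Fin n → ℂ) → ℂ) :
    HPhiNormSq (weight L P) f = ∫⁻ x, ENNReal.ofReal (‖f x‖ ^ 2) *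
      ENNReal.ofReal (Real.exp (-(4 * π * weight L P x))) := by
  refine lintegral_congr fun x => ?_
  rw [← ENNReal.ofReal_mul (by positivity)]
  ring_nf

theorem convolution_identity {L₁ P₁ L₂ P₂ Q : Matrix (Fin n) (Fin n) ℂ}
    (hQ : ∀ x, ∃ k, ∀ w, 2 * weight L₂ P₂ (x - w) + (star w ⬝ᵥ Q *ᵥ w).re =
        2 * weight L₁ P₁ x +
          (2 * weight L₂ P₂ (w - k) + (star (w - k) ⬝ᵥ Q *ᵥ (w - k)).re))
    {h : (Fin n → ℂ) → ℂ} (hh : Continuous h) :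
    (∫⁻ u, ENNReal.ofReal
        (Real.exp (-(2 * π * (2 * weight L₂ P₂ u + (star u ⬝ᵥ Q *ᵥ u).re))))) *
        HPhiNormSq (weight L₁ P₁) h =
      ∫⁻ y, ENNReal.ofReal (Real.exp (-(4 * π * weight L₂ P₂ y))) *
        ∫⁻ w, ENNReal.ofReal (‖h (y + w)‖ ^ 2) *
          ENNReal.ofReal (Real.exp (-(2 * π * (star w ⬝ᵥ Q *ᵥ w).re))) := by
  set e : (Fin n → ℂ) → ℝ≥0∞ := fun y => ENNReal.ofReal (Real.exp (-(4 * π * weight L₂ P₂ y)))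
    with he
  set ρ : (Fin n → ℂ) → ℝ≥0∞ := fun w =>
    ENNReal.ofReal (Real.exp (-(2 * π * (star w ⬝ᵥ Q *ᵥ w).re))) with hρdef
  set a : (Fin n → ℂ) → ℝ≥0∞ := fun x => ENNReal.ofReal (‖h x‖ ^ 2) with ha
  set Z := ∫⁻ u, ENNReal.ofReal
        (Real.exp (-(2 * π * (2 * weight L₂ P₂ u + (star u ⬝ᵥ Q *ᵥ u).re)))) with hZ
  have hme : Measurable e := by fun_prop
  have hmρ : Measurable ρ := by fun_prop
  have hma : Measurable a := by fun_prop
  have hgauss : ∀ x, Z * ENNReal.ofReal (Real.exp (-(4 * π * weight L₁ P₁ x))) =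
      ∫⁻ w, e (x - w) * ρ w := fun x => by
    obtain ⟨k, hk⟩ := hQ x
    rw [hZ, ← lintegral_sub_right_eq_self _ k, ← lintegral_mul_const _ (by fun_prop)]
    refine lintegral_congr fun w => ?_
    rw [he, hρdef]
    simp only
    rw [← ENNReal.ofReal_mul (by positivity), ← ENNReal.ofReal_mul (by positivity), ← Real.exp_add,
      ← Real.exp_add]
    congr 2
    linear_combination (2 * π) * hk w
  calc Z * HPhiNormSq (weight L₁ P₁) h
      = ∫⁻ x, ∫⁻ w, a x * (e (x - w) * ρ w) := by
        rw [HPhiNormSq_eq, ← lintegral_const_mul _ (by fun_prop)]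
        refine lintegral_congr fun x => ?_
        rw [lintegral_const_mul _ (by fun_prop), ← hgauss, mul_left_comm]
    _ = ∫⁻ w, ∫⁻ x, a x * (e (x - w) * ρ w) :=
        lintegral_lintegral_swap (Measurable.aemeasurable (by fun_prop))
    _ = ∫⁻ w, ∫⁻ y, a (y + w) * (e y * ρ w) := by
        refine lintegral_congr fun w => ?_
        rw [← lintegral_add_right_eq_self _ w]
        simp only [add_sub_cancel_right]
    _ = ∫⁻ y, ∫⁻ w, a (y + w) * (e y * ρ w) :=
        lintegral_lintegral_swap (Measurable.aemeasurable (by fun_prop))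
    _ = ∫⁻ y, e y * ∫⁻ w, a (y + w) * ρ w := by
        refine lintegral_congr fun y => ?_
        rw [← lintegral_const_mul _ (by fun_prop)]
        exact lintegral_congr fun w => mul_left_comm _ _ _

/-- Among entire functions, constants maximize the ratio of the two Gaussian norms. -/
theorem exists_norm_ratio {L₁ P₁ L₂ P₂ : Matrix (Fin n) (Fin n) ℂ}
    (hL₁ : L₁.PosDef) (hL₂ : L₂.PosDef) (hP₁ : P₁.IsSymm) (hP₂ : P₂.IsSymm)
    (hlt : ∀ x : Fin n → ℂ, x ≠ 0 → weight L₁ P₁ x < weight L₂ P₂ x)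
    (hdec : RelDecomp (bM L₁ P₁) (gM L₁ P₁) (bM L₂ P₂) (gM L₂ P₂)) :
    (HPhiNormSq (weight L₁ P₁) (fun _ => 1) ≠ 0 ∧ HPhiNormSq (weight L₁ P₁) (fun _ => 1) ≠ ⊤ ∧
      HPhiNormSq (weight L₂ P₂) (fun _ => 1) ≠ ⊤) ∧
    ∀ h : (Fin n → ℂ) → ℂ, Differentiable ℂ h →
      HPhiNormSq (weight L₂ P₂) h ≤ HPhiNormSq (weight L₂ P₂) (fun _ => 1) /
        HPhiNormSq (weight L₁ P₁) (fun _ => 1) * HPhiNormSq (weight L₁ P₁) h := by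
  have hG₁ := posDef_gM_left hL₁ hL₂ hP₁ hP₂ hlt hdec
  have hG₂ := posDef_gM_right hL₁ hL₂ hP₁ hP₂ hlt hdec
  obtain ⟨Q, hQpos, hQ⟩ := weight_convolution hL₁ hL₂ hP₁ hP₂ hG₁ hG₂
    (posDef_inv_sub_inv hL₁ hL₂ hP₁ hP₂ hlt hdec) (inv_gM_mul_bM_eq hL₁ hL₂ hP₁ hP₂ hlt hdec)
  have hQsmul : ∀ (c : ℂ) (w : Fin n → ℂ),
      (star (c • w) ⬝ᵥ Q *ᵥ (c • w)).re = ‖c‖ ^ 2 * (star w ⬝ᵥ Q *ᵥ w).re := fun c w => by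
    rw [star_smul, mulVec_smul, smul_dotProduct, dotProduct_smul, smul_smul, smul_eq_mul,
      ← Complex.re_ofReal_mul, Complex.ofReal_pow, ← Complex.conj_mul', RCLike.star_def]
  have hQsmulR : ∀ (t : ℝ) (w : Fin n → ℂ),
      (star (t • w) ⬝ᵥ Q *ᵥ (t • w)).re = t ^ 2 * (star w ⬝ᵥ Q *ᵥ w).re := fun t w => by
    have ht : t • w = (t : ℂ) • w := by ext i; simp
    rw [ht, hQsmul]; simp
  have hQp : ∀ w, w ≠ 0 → 0 < (star w ⬝ᵥ Q *ᵥ w).re := fun w hw => by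
    simpa using hQpos.re_dotProduct_pos hw
  have hπ := Real.pi_pos
  have hw₁ := fun {x : Fin n → ℂ} (hx : x ≠ 0) => weight_pos hL₁ hP₁ hG₁ hx
  have hw₂ := fun {x : Fin n → ℂ} (hx : x ≠ 0) => weight_pos hL₂ hP₂ hG₂ hx
  have hone : ∀ L P : Matrix (Fin n) (Fin n) ℂ, HPhiNormSq (weight L P) (fun _ => 1) =
      ∫⁻ x, ENNReal.ofReal (Real.exp (-(4 * π * weight L P x))) := fun L P => by
    rw [HPhiNormSq_eq]; simp
  have hfin : ∀ L P : Matrix (Fin n) (Fin n) ℂ, (∀ x, x ≠ 0 → 0 < weight L P x) →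
      HPhiNormSq (weight L P) (fun _ => 1) ≠ ⊤ := fun L P hpos => by
    rw [hone]
    refine lintegral_exp_neg_ne_top (by fun_prop) (fun t x => ?_) fun x hx => ?_
    · rw [weight_smul]; ring
    · have := hpos x hx
      positivity
  have hN₁0 : HPhiNormSq (weight L₁ P₁) (fun _ => 1) ≠ 0 := by
    rw [hone]; exact lintegral_exp_neg_ne_zero (by fun_prop)
  have hN₁ := hfin L₁ P₁ fun _ => hw₁
  have hN₂ := hfin L₂ P₂ fun _ => hw₂
  refine ⟨⟨hN₁0, hN₁, hN₂⟩, fun h hh => ?_⟩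
  set Z := ∫⁻ u, ENNReal.ofReal
        (Real.exp (-(2 * π * (2 * weight L₂ P₂ u + (star u ⬝ᵥ Q *ᵥ u).re)))) with hZ
  set q := ∫⁻ w, ENNReal.ofReal (Real.exp (-(2 * π * (star w ⬝ᵥ Q *ᵥ w).re))) with hq
  have hq0 : q ≠ 0 := lintegral_exp_neg_ne_zero (by fun_prop)
  have hqt : q ≠ ⊤ := by
    refine lintegral_exp_neg_ne_top (by fun_prop) (fun t x => ?_) fun x hx => ?_
    · rw [hQsmulR]; ring
    · have := hQp x hx
      positivity
  have hconv1 : Z * HPhiNormSq (weight L₁ P₁) (fun _ => 1) =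
      HPhiNormSq (weight L₂ P₂) (fun _ => 1) * q := by
    rw [convolution_identity hQ continuous_const, hone, ← lintegral_mul_const _ (by fun_prop)]
    simp [hq]
  have hconv : HPhiNormSq (weight L₂ P₂) h * q ≤ Z * HPhiNormSq (weight L₁ P₁) h := by
    have hcont := hh.continuous
    rw [convolution_identity hQ hh.continuous, HPhiNormSq_eq, ← lintegral_mul_const _ (by fun_prop)]
    refine lintegral_mono fun y => ?_
    rw [mul_comm (ENNReal.ofReal (‖h y‖ ^ 2)), mul_assoc]
    gcongr
    refine sq_norm_mul_lintegral_le hh (by fun_prop) (fun c w hc => ?_) y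
    rw [hQsmul, hc]; simp
  have hZq : Z = HPhiNormSq (weight L₂ P₂) (fun _ => 1) /
      HPhiNormSq (weight L₁ P₁) (fun _ => 1) * q := by
    rw [ENNReal.mul_comm_div, ← mul_div_assoc, ← hconv1, mul_div_assoc,
      ENNReal.div_self hN₁0 hN₁, mul_one]
  rw [hZq, mul_right_comm] at hconv
  exact (ENNReal.mul_le_mul_iff_left hq0 hqt).1 hconv

/-- Multiplication by a Gaussian changes the pluriharmonic part of the weight. -/
theorem HPhiNormSq_gaussian_mul (L P T : Matrix (Fin n) (Fin n) ℂ) (h : (Fin n → ℂ) → ℂ) :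
    HPhiNormSq (weight L P)
        (fun x => Complex.exp ((π : ℂ) * Complex.I * dotC (T.mulVec x) x) * h x) =
      HPhiNormSq (weight L (P - Complex.I • T)) h := by
  refine lintegral_congr fun x => ?_
  have hw : weight L (P - Complex.I • T) x = weight L P x + (1 / 2) * (dotC (T *ᵥ x) x).im := by
    have hd : dotC (T *ᵥ x) x = x ⬝ᵥ T *ᵥ x := dotProduct_comm _ _
    rw [weight_eq, weight_eq, hd, sub_mulVec, smul_mulVec, dotProduct_sub, dotProduct_smul]
    simp
    ring
  have he : ((π : ℂ) * Complex.I * dotC (T *ᵥ x) x).re = -(π * (dotC (T *ᵥ x) x).im) := by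
    simp
  rw [norm_mul, Complex.norm_exp, he, hw, mul_pow, ← Real.exp_nat_mul, mul_right_comm, mul_comm,
    ← Real.exp_add]
  congr 3
  push_cast
  ring

end GaussWit

/-- the Gaussian g_T witnesses the norm of the embedding. -/
theorem gaussian_witnesses_norm (n : ℕ) (L₁ P₁ L₂ P₂ : Matrix (Fin n) (Fin n) ℂ)
    (hL₁ : L₁.PosDef) (hL₂ : L₂.PosDef) (hP₁ : P₁.IsSymm) (hP₂ : P₂.IsSymm)
    (hlt : ∀ x : Fin n → ℂ, x ≠ 0 → weight L₁ P₁ x < weight L₂ P₂ x)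
    (T : Matrix (Fin n) (Fin n) ℂ) (hT : T.IsSymm)
    (hgraph : (Set.range fun x : Fin n → ℂ => Sum.elim x (T.mulVec x)) =
        ↑(⨆ μ ∈ Set.Ioo (0 : ℝ) 1,
          Module.End.eigenspace
            (Matrix.toLin' ((Amat L₂ P₂)⁻¹ * Amat L₁ P₁)) (μ : ℂ))) :
    0 < HPhiNorm (weight L₁ P₁) (fun x => Complex.exp ((π : ℂ) * Complex.I * dotC (T.mulVec x) x)) ∧
    HPhiNorm (weight L₁ P₁) (fun x => Complex.exp ((π : ℂ) * Complex.I * dotC (T.mulVec x) x)) ≠ ⊤ ∧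
    HPhiNorm (weight L₂ P₂) (fun x => Complex.exp ((π : ℂ) * Complex.I * dotC (T.mulVec x) x)) ≠ ⊤ ∧
    HPhiNorm (weight L₂ P₂) (fun x => Complex.exp ((π : ℂ) * Complex.I * dotC (T.mulVec x) x)) /
        HPhiNorm (weight L₁ P₁) (fun x => Complex.exp ((π : ℂ) * Complex.I * dotC (T.mulVec x) x)) =
      embedNorm (weight L₁ P₁) (weight L₂ P₂) := by
  set P₁' := P₁ - Complex.I • T with hP₁'
  set P₂' := P₂ - Complex.I • T with hP₂'
  set g : (Fin n → ℂ) → ℂ := fun x => Complex.exp ((π : ℂ) * Complex.I * dotC (T.mulVec x) x)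
    with hg
  have hTI : (Complex.I • T).IsSymm := hT.smul _
  have hdiff : ∀ x, weight L₂ P₂' x - weight L₁ P₁' x = weight L₂ P₂ x - weight L₁ P₁ x := by
    intro x
    simp only [hP₁', hP₂', GaussWit.weight_eq, sub_mulVec, dotProduct_sub, Complex.sub_re]
    ring
  have hlt' : ∀ x : Fin n → ℂ, x ≠ 0 → weight L₁ P₁' x < weight L₂ P₂' x := fun x hx => by
    linarith [hdiff x, hlt x hx]
  obtain ⟨⟨h₁0, h₁, h₂⟩, hle⟩ := GaussWit.exists_norm_ratio hL₁ hL₂ (hP₁.sub hTI) (hP₂.sub hTI)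
    hlt' (GaussWit.relDecomp_of_graph hL₁ hL₂ hP₁ hP₂ hgraph)
  have hN₁ : HPhiNormSq (weight L₁ P₁) g = HPhiNormSq (weight L₁ P₁') fun _ => 1 := by
    simpa using GaussWit.HPhiNormSq_gaussian_mul L₁ P₁ T fun _ => 1
  have hN₂ : HPhiNormSq (weight L₂ P₂) g = HPhiNormSq (weight L₂ P₂') fun _ => 1 := by
    simpa using GaussWit.HPhiNormSq_gaussian_mul L₂ P₂ T fun _ => 1
  rw [← hN₁] at h₁0 h₁
  rw [← hN₂] at h₂
  have hd : Differentiable ℂ fun x : Fin n → ℂ => dotC (T.mulVec x) x := by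
    simp only [dotC, mulVec, dotProduct]
    fun_prop
  have hgd : Differentiable ℂ g := by fun_prop
  have hhalf : (0 : ℝ) < 1 / 2 := by norm_num
  have hpos : 0 < HPhiNorm (weight L₁ P₁) g := ENNReal.rpow_pos (pos_iff_ne_zero.2 h₁0) h₁
  have hfin₁ : HPhiNorm (weight L₁ P₁) g ≠ ⊤ := ENNReal.rpow_ne_top_of_nonneg hhalf.le h₁
  have hfin₂ : HPhiNorm (weight L₂ P₂) g ≠ ⊤ := ENNReal.rpow_ne_top_of_nonneg hhalf.le h₂
  refine ⟨hpos, hfin₁, hfin₂, le_antisymm ?_ ?_⟩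
  · exact le_iSup (fun f : {f : (Fin n → ℂ) → ℂ // Differentiable ℂ f ∧
      0 < HPhiNorm (weight L₁ P₁) f ∧ HPhiNorm (weight L₁ P₁) f ≠ ⊤} =>
      HPhiNorm (weight L₂ P₂) f.1 / HPhiNorm (weight L₁ P₁) f.1) ⟨g, hgd, hpos, hfin₁⟩
  · refine iSup_le fun ⟨f, hf, hf0, hft⟩ => ?_
    set h : (Fin n → ℂ) → ℂ := fun x =>
      Complex.exp (-((π : ℂ) * Complex.I * dotC (T.mulVec x) x)) * f x with hh
    have hfh : f = fun x => Complex.exp ((π : ℂ) * Complex.I * dotC (T.mulVec x) x) * h x := by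
      funext x
      rw [hh, ← mul_assoc, ← Complex.exp_add, add_neg_cancel, Complex.exp_zero, one_mul]
    have key := hle h (by fun_prop)
    rw [← hN₁, ← hN₂, ← GaussWit.HPhiNormSq_gaussian_mul, ← GaussWit.HPhiNormSq_gaussian_mul,
      ← hfh] at key
    rw [ENNReal.div_le_iff hf0.ne' hft]
    simp only [HPhiNorm]
    rw [← ENNReal.div_rpow_of_nonneg _ _ hhalf.le, ← ENNReal.mul_rpow_of_nonneg _ _ hhalf.le]
    exact ENNReal.rpow_le_rpow key hhalf.le

end
end

section
/- Let L₁, L₂ be n×n positive definite Hermitian matrices with L₂ − L₁ positive semidefinite, and set Φ_j(x) = (1/2) L_j x·x̄ for j = 1, 2. Then sup{‖f‖_{H_{Φ₂}}/‖f‖_{H_{Φ₁}} : f entire on ℂⁿ, 0 < ‖f‖_{H_{Φ₁}} < ∞} = (det L₁ / det L₂)^{1/2}. -/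
open MeasureTheory Real Matrix
open scoped ENNReal ComplexOrder

noncomputable section

/-- The Poisson kernel as a probability measure of angles: integrating the modulus of
an entire function against it over the unit circle bounds the modulus at `r ∈ [0, 1]`. -/
lemma exists_isProbabilityMeasure_enorm_le_lintegral_circleMap {r : ℝ} (hr₀ : 0 ≤ r)
    (hr₁ : r ≤ 1) :
    ∃ μ : Measure ℝ, IsProbabilityMeasure μ ∧ ∀ h : ℂ → ℂ, Differentiable ℂ h →
      ‖h r‖ₑ ≤ ∫⁻ θ, ‖h (circleMap 0 1 θ)‖ₑ ∂μ := by
  rcases hr₁.eq_or_lt with rfl | hr₁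
  · exact ⟨Measure.dirac 0, inferInstance, fun h _ ↦ by simp [circleMap]⟩
  have hball : (r : ℂ) ∈ Metric.ball (0 : ℂ) 1 := by simpa [abs_of_nonneg hr₀] using hr₁
  set k : ℝ → ℝ := fun θ ↦ (2 * π)⁻¹ * poissonKernel 0 r (circleMap 0 1 θ) with hk
  have hne (θ : ℝ) : circleMap 0 1 θ - (r : ℂ) ≠ 0 := by
    intro h
    have := congrArg norm (sub_eq_zero.1 h)
    simp [abs_of_nonneg hr₀] at this
    linarith
  have hk_nonneg (θ : ℝ) : 0 ≤ k θ := by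
    have : r ^ 2 ≤ 1 := by nlinarith
    simp only [hk, poissonKernel_def]
    have : 0 ≤ ‖circleMap 0 1 θ - 0‖ ^ 2 - ‖(r : ℂ) - 0‖ ^ 2 := by
      simpa [abs_of_nonneg hr₀] using this
    positivity
  have hk_cont : Continuous k := by
    simp only [hk, poissonKernel_def, sub_zero]
    refine continuous_const.mul (Continuous.div (by fun_prop) (by fun_prop) fun θ ↦ ?_)
    exact pow_ne_zero 2 (norm_ne_zero_iff.2 (hne θ))
  have hformula (h : ℂ → ℂ) (hh : Differentiable ℂ h) :
      h r = ∫ θ in Set.Ioc 0 (2 * π), k θ • h (circleMap 0 1 θ) := by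
    rw [← hh.diffContOnCl.circleAverage_poissonKernel_smul hball, circleAverage_def,
      intervalIntegral.integral_of_le (by positivity), ← integral_smul]
    simp [hk, mul_assoc]
  have hmeas : Measurable fun θ ↦ ENNReal.ofReal (k θ) := by fun_prop
  refine ⟨(volume.restrict (Set.Ioc 0 (2 * π))).withDensity fun θ ↦ ENNReal.ofReal (k θ),
    ⟨?_⟩, fun h hh ↦ ?_⟩
  · have h1 := hformula (fun _ ↦ 1) (differentiable_const _)
    simp only [Complex.real_smul, mul_one] at h1
    rw [integral_complex_ofReal] at h1
    rw [withDensity_apply _ MeasurableSet.univ, Measure.restrict_univ,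
      ← ofReal_integral_eq_lintegral_ofReal (hk_cont.integrableOn_Ioc)
        (Filter.Eventually.of_forall hk_nonneg)]
    rw [← Complex.ofReal_injective (h1.symm.trans Complex.ofReal_one.symm).symm]
    simp
  · rw [lintegral_withDensity_eq_lintegral_mul₀ hmeas.aemeasurable
      (by have := hh.continuous; fun_prop), hformula h hh]
    refine (enorm_integral_le_lintegral_enorm _).trans (lintegral_mono fun θ ↦ ?_)
    rw [enorm_smul, Real.enorm_of_nonneg (hk_nonneg θ)]
    rfl

/-- Multiplication by a vector of complex numbers of modulus one preserves Lebesgue measure. -/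
lemma measurePreserving_mul_left_of_norm_eq_one {ι : Type*} [Fintype ι] {u : ι → ℂ}
    (hu : ∀ i, ‖u i‖ = 1) : MeasurePreserving (fun x : ι → ℂ ↦ u * x) := by
  refine volume_preserving_pi (f := fun i z ↦ u i * z) fun i ↦ ?_
  exact (rotation ⟨u i, by simp [Submonoid.unitSphere, hu i]⟩).measurePreserving

lemma differentiable_mulSingle {ι : Type*} [Fintype ι] [DecidableEq ι] (j : ι) :
    Differentiable ℂ fun z : ℂ ↦ (Pi.mulSingle j z : ι → ℂ) := by
  refine differentiable_pi.2 fun i ↦ ?_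
  by_cases h : i = j
  · subst h; simp
  · simp [Pi.mulSingle_eq_of_ne h]

/-- Contracting one coordinate decreases the weighted `L¹` norm of an entire function. -/
lemma lintegral_enorm_mulSingle_mul_le {ι : Type*} [Fintype ι] [DecidableEq ι]
    {f : (ι → ℂ) → ℂ} (hf : Differentiable ℂ f) {w : (ι → ℂ) → ℝ≥0∞} (hw : Measurable w)
    (hrot : ∀ u : ι → ℂ, (∀ i, ‖u i‖ = 1) → ∀ x, w (u * x) = w x)
    (j : ι) {r : ℝ} (hr₀ : 0 ≤ r) (hr₁ : r ≤ 1) :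
    ∫⁻ x, ‖f (Pi.mulSingle j (r : ℂ) * x)‖ₑ * w x ≤ ∫⁻ x, ‖f x‖ₑ * w x := by
  obtain ⟨μ, _, hμ⟩ := exists_isProbabilityMeasure_enorm_le_lintegral_circleMap hr₀ hr₁
  have hfc := hf.continuous
  have hrotation (θ : ℝ) (i : ι) : ‖(Pi.mulSingle j (circleMap 0 1 θ) : ι → ℂ) i‖ = 1 := by
    by_cases h : i = j
    · subst h; simp
    · simp [Pi.mulSingle_eq_of_ne h]
  have hsc := (differentiable_mulSingle j).continuous
  calc ∫⁻ x, ‖f (Pi.mulSingle j (r : ℂ) * x)‖ₑ * w x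
      ≤ ∫⁻ x, ∫⁻ θ, ‖f (Pi.mulSingle j (circleMap 0 1 θ) * x)‖ₑ * w x ∂μ := by
        refine lintegral_mono fun x ↦ ?_
        rw [lintegral_mul_const _ (Continuous.measurable (by fun_prop))]
        gcongr
        exact hμ (fun z ↦ f (Pi.mulSingle j z * x))
          (hf.comp ((differentiable_mulSingle j).mul_const x))
    _ = ∫⁻ θ, (∫⁻ x, ‖f (Pi.mulSingle j (circleMap 0 1 θ) * x)‖ₑ * w x) ∂μ := by
        refine lintegral_lintegral_swap (Measurable.aemeasurable ?_)
        refine Measurable.mul (Continuous.measurable ?_) (by fun_prop)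
        fun_prop
    _ = ∫⁻ _, (∫⁻ x, ‖f x‖ₑ * w x) ∂μ := by
        refine lintegral_congr fun θ ↦ ?_
        have hcomp := (measurePreserving_mul_left_of_norm_eq_one (hrotation θ)).lintegral_comp
          (hfc.enorm.measurable.mul hw)
        simpa only [Pi.mul_apply, hrot _ (hrotation θ)] using hcomp
    _ = ∫⁻ x, ‖f x‖ₑ * w x := by simp

/-- Contracting all coordinates decreases the weighted `L¹` norm of an entire function, for
every weight invariant under the torus. -/
lemma lintegral_enorm_mul_le {ι : Type*} [Fintype ι]
    {f : (ι → ℂ) → ℂ} (hf : Differentiable ℂ f) {w : (ι → ℂ) → ℝ≥0∞} (hw : Measurable w)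
    (hrot : ∀ u : ι → ℂ, (∀ i, ‖u i‖ = 1) → ∀ x, w (u * x) = w x)
    {c : ι → ℝ} (hc₀ : ∀ i, 0 ≤ c i) (hc₁ : ∀ i, c i ≤ 1) :
    ∫⁻ x, ‖f ((fun i ↦ (c i : ℂ)) * x)‖ₑ * w x ≤ ∫⁻ x, ‖f x‖ₑ * w x := by
  classical
  rw [← Finset.univ_prod_mulSingle fun i ↦ (c i : ℂ)]
  induction (Finset.univ : Finset ι) using Finset.induction_on generalizing f with
  | empty => simp
  | insert j s hj ih =>
    simp_rw [Finset.prod_insert hj, mul_assoc]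
    have hscale : Differentiable ℂ fun x : ι → ℂ ↦ f (Pi.mulSingle j (c j : ℂ) * x) :=
      hf.comp (differentiable_id.const_mul (Pi.mulSingle j (c j : ℂ) : ι → ℂ))
    exact (ih hscale).trans
      (lintegral_enorm_mulSingle_mul_le hf hw hrot j (hc₀ j) (hc₁ j))

section HPhi

variable {n : ℕ}

lemma weight_eq_re_dotProduct (L : Matrix (Fin n) (Fin n) ℂ) (x : Fin n → ℂ) :
    weight L 0 x = (1 / 2) * (star x ⬝ᵥ L *ᵥ x).re := by
  simp [weight, dotC, dotProduct, mul_comm]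

lemma weight_conjTranspose_mul_mul (L B : Matrix (Fin n) (Fin n) ℂ) (x : Fin n → ℂ) :
    weight (Bᴴ * L * B) 0 x = weight L 0 (B *ᵥ x) := by
  simp only [weight_eq_re_dotProduct, star_mulVec, ← mulVec_mulVec, dotProduct_mulVec,
    vecMul_vecMul]

lemma weight_one (x : Fin n → ℂ) : weight 1 0 x = (1 / 2) * ∑ i, ‖x i‖ ^ 2 := by
  simp [weight_eq_re_dotProduct, dotProduct, ← Complex.normSq_eq_norm_sq, Complex.normSq_apply]

lemma continuous_weight (L : Matrix (Fin n) (Fin n) ℂ) : Continuous (weight L 0) := by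
  unfold weight dotC
  fun_prop

lemma HPhiNormSq_eq_lintegral_enorm_mul (Φ : (Fin n → ℂ) → ℝ) (f : (Fin n → ℂ) → ℂ) :
    HPhiNormSq Φ f = ∫⁻ x, ‖f x ^ 2‖ₑ * ENNReal.ofReal (Real.exp (-4 * π * Φ x)) := by
  simp only [HPhiNormSq]
  refine lintegral_congr fun x ↦ ?_
  rw [ENNReal.ofReal_mul (by positivity), ← norm_pow, ofReal_norm]

lemma HPhiNormSq_weight_one_comp_mul_le {f : (Fin n → ℂ) → ℂ} (hf : Differentiable ℂ f)
    {c : Fin n → ℝ} (hc₀ : ∀ i, 0 ≤ c i) (hc₁ : ∀ i, c i ≤ 1) :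
    HPhiNormSq (weight 1 0) (fun x ↦ f ((fun i ↦ (c i : ℂ)) * x)) ≤
      HPhiNormSq (weight 1 0) f := by
  simp only [HPhiNormSq_eq_lintegral_enorm_mul]
  refine lintegral_enorm_mul_le (f := fun x ↦ f x ^ 2) (by fun_prop) ?_ ?_ hc₀ hc₁
  · have := continuous_weight (n := n) 1
    fun_prop
  · intro u hu x
    simp [weight_one, hu]

/-- Linear change of variables in the `H_Φ` norm. -/
lemma HPhiNormSq_eq_mul_comp_mulVec (L : Matrix (Fin n) (Fin n) ℂ)
    {B : Matrix (Fin n) (Fin n) ℂ} (hB : B.det ≠ 0) {f : (Fin n → ℂ) → ℂ} (hf : Continuous f) :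
    HPhiNormSq (weight L 0) f = ENNReal.ofReal (‖B.det‖ ^ 2) *
      HPhiNormSq (weight (Bᴴ * L * B) 0) (fun x ↦ f (B *ᵥ x)) := by
  have hdet : LinearMap.det ((toLin' B).restrictScalars ℝ) = ‖B.det‖ ^ 2 := by
    rw [LinearMap.det_restrictScalars, LinearMap.det_toLin', Algebra.norm_complex_apply,
      Complex.normSq_eq_norm_sq]
  have hpos : 0 < ‖B.det‖ ^ 2 := by positivity
  have hmap := Measure.map_linearMap_addHaar_eq_smul_addHaar
    (volume : Measure (Fin n → ℂ)) (hdet.trans_ne hpos.ne')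
  have hcont : Continuous fun x : Fin n → ℂ ↦ B *ᵥ x := by fun_prop
  have hw := continuous_weight L
  simp only [HPhiNormSq, weight_conjTranspose_mul_mul]
  have hlint := lintegral_map (μ := volume) (f := fun x ↦
    ENNReal.ofReal (‖f x‖ ^ 2 * Real.exp (-4 * π * weight L 0 x))) (by fun_prop) hcont.measurable
  change Measure.map (fun x ↦ B *ᵥ x) volume = _ at hmap
  rw [← hlint, hmap, lintegral_smul_measure, hdet, smul_eq_mul, ← mul_assoc,
    ← ENNReal.ofReal_mul hpos.le,
    abs_of_pos (by positivity), mul_inv_cancel₀ hpos.ne']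
  simp

lemma HPhiNormSq_weight_one_one_ne_top :
    HPhiNormSq (weight (1 : Matrix (Fin n) (Fin n) ℂ) 0) (fun _ ↦ 1) ≠ ⊤ := by
  have hgauss : Integrable fun z : ℂ ↦ Real.exp (-(2 * π) * ‖z‖ ^ 2) := by
    have h := (GaussianFourier.integrable_cexp_neg_mul_sq_norm_add (V := ℂ) (b := 2 * π)
      (by simp [Real.pi_pos]) 0 0).norm
    refine h.congr (Filter.Eventually.of_forall fun z ↦ ?_)
    simp [Complex.norm_exp, ← Complex.ofReal_pow]
  have hint : Integrable fun x : Fin n → ℂ ↦ ∏ i, Real.exp (-(2 * π) * ‖x i‖ ^ 2) :=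
    Integrable.fintype_prod (f := fun _ z ↦ Real.exp (-(2 * π) * ‖z‖ ^ 2)) fun _ ↦ hgauss
  refine (lt_of_eq_of_lt (lintegral_congr fun x ↦ ?_) hint.lintegral_lt_top).ne
  rw [← Real.exp_sum, ← Finset.mul_sum, weight_one]
  congr 1
  simp only [norm_one, one_pow, one_mul]
  ring_nf

lemma HPhiNormSq_one_ne_zero (L : Matrix (Fin n) (Fin n) ℂ) :
    HPhiNormSq (weight L 0) (fun _ ↦ 1) ≠ 0 := by
  have hw := continuous_weight L
  refine (lintegral_pos_iff_support (by fun_prop)).2 ?_ |>.ne'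
  have : (Function.support fun x : Fin n → ℂ ↦
      ENNReal.ofReal (‖(1 : ℂ)‖ ^ 2 * Real.exp (-4 * π * weight L 0 x))) = Set.univ := by
    ext x
    simp [Real.exp_pos]
  rw [this]
  exact isOpen_univ.measure_pos _ Set.univ_nonempty

lemma Matrix.PosDef.exists_conjTranspose_mul_mul_eq_diagonal
    {A : Matrix (Fin n) (Fin n) ℂ} (hA : A.PosDef) :
    ∃ (U : Matrix (Fin n) (Fin n) ℂ) (d : Fin n → ℝ), (∀ i, 0 < d i) ∧ Uᴴ * U = 1 ∧
      Uᴴ * A * U = diagonal fun i ↦ (d i : ℂ) := by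
  refine ⟨hA.1.eigenvectorUnitary, hA.1.eigenvalues, hA.eigenvalues_pos, ?_, ?_⟩
  · exact Unitary.coe_star_mul_self _
  · have h := hA.1.conjStarAlgAut_star_eigenvectorUnitary
    rw [Unitary.conjStarAlgAut_star_apply] at h
    exact h

/-- Scaling the columns of a diagonalizing matrix by the inverse square roots of the diagonal
entries gives the identity matrix. -/
lemma conjTranspose_mul_diagonal_mul_mul_eq_one {A U : Matrix (Fin n) (Fin n) ℂ}
    {d : Fin n → ℝ} (hd : ∀ i, 0 < d i) (h : Uᴴ * A * U = diagonal fun i ↦ (d i : ℂ)) :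
    (U * diagonal fun i ↦ (((√(d i))⁻¹ : ℝ) : ℂ))ᴴ * A *
      (U * diagonal fun i ↦ (((√(d i))⁻¹ : ℝ) : ℂ)) = 1 := by
  have hassoc (D : Matrix (Fin n) (Fin n) ℂ) :
      (U * D)ᴴ * A * (U * D) = Dᴴ * (Uᴴ * A * U) * D := by
    simp only [conjTranspose_mul, Matrix.mul_assoc]
  rw [hassoc, h, diagonal_conjTranspose, diagonal_mul_diagonal, diagonal_mul_diagonal,
    ← diagonal_one]
  congr 1
  ext i
  have hsq : (√(d i))⁻¹ * d i * (√(d i))⁻¹ = 1 := by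
    have := Real.sqrt_pos.2 (hd i)
    field_simp
    exact (Real.sq_sqrt (hd i).le).symm
  simpa using congrArg Complex.ofReal hsq

/-- Simultaneous diagonalization of two positive definite Hermitian forms. -/
lemma exists_simultaneous_diagonalization {L₁ L₂ : Matrix (Fin n) (Fin n) ℂ}
    (hL₁ : L₁.PosDef) (hL₂ : L₂.PosDef) (hle : (L₂ - L₁).PosSemidef) :
    ∃ (B : Matrix (Fin n) (Fin n) ℂ) (c : Fin n → ℝ), (∀ i, 0 < c i) ∧ (∀ i, c i ≤ 1) ∧
      Bᴴ * L₁ * B = 1 ∧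
      (B * diagonal fun i ↦ (c i : ℂ))ᴴ * L₂ * (B * diagonal fun i ↦ (c i : ℂ)) = 1 := by
  obtain ⟨U, d, hd, -, hUd⟩ := hL₁.exists_conjTranspose_mul_mul_eq_diagonal
  have hM := conjTranspose_mul_diagonal_mul_mul_eq_one hd hUd
  set M := U * diagonal fun i ↦ (((√(d i))⁻¹ : ℝ) : ℂ)
  have hMinj : Function.Injective M.mulVec :=
    Function.LeftInverse.injective (g := (Mᴴ * L₁).mulVec) fun x ↦ by simp [hM]
  obtain ⟨V, e, he, hV, hVe⟩ :=
    (hL₂.conjTranspose_mul_mul_same hMinj).exists_conjTranspose_mul_mul_eq_diagonal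
  have h₁ : (M * V)ᴴ * L₁ * (M * V) = 1 := by
    rw [conjTranspose_mul, show Vᴴ * Mᴴ * L₁ * (M * V) = Vᴴ * (Mᴴ * L₁ * M) * V by
      simp only [Matrix.mul_assoc], hM, Matrix.mul_one, hV]
  have h₂ : (M * V)ᴴ * L₂ * (M * V) = diagonal fun i ↦ (e i : ℂ) := by
    rw [← hVe, conjTranspose_mul]
    simp only [Matrix.mul_assoc]
  have he₁ (i : Fin n) : 1 ≤ e i := by
    have h := (hle.conjTranspose_mul_mul_same (M * V)).diag_nonneg (i := i)
    rw [Matrix.mul_sub, Matrix.sub_mul, h₁, h₂] at h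
    simpa [← Complex.ofReal_one, ← Complex.ofReal_sub] using h
  refine ⟨M * V, fun i ↦ (√(e i))⁻¹, fun i ↦ ?_, fun i ↦ ?_, h₁,
    conjTranspose_mul_diagonal_mul_mul_eq_one he h₂⟩
  · have := he i
    positivity
  · exact inv_le_one_of_one_le₀ (Real.one_le_sqrt.2 (he₁ i))

/-- A congruence to the identity determines the determinant up to a squared modulus. -/
lemma norm_det_sq_mul_det_re {L B : Matrix (Fin n) (Fin n) ℂ} (h : Bᴴ * L * B = 1) :
    ‖B.det‖ ^ 2 * L.det.re = 1 := by
  have h' := congrArg det h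
  rw [det_mul, det_mul, det_conjTranspose, det_one, mul_right_comm, mul_comm (star _),
    Complex.star_def, Complex.mul_conj, Complex.normSq_eq_norm_sq] at h'
  simpa only [Complex.re_ofReal_mul, Complex.one_re] using congrArg Complex.re h'

end HPhi

/-- embedding norm between weights with no pluriharmonic part. -/
theorem embedding_norm_no_pluriharmonic (n : ℕ) (L₁ L₂ : Matrix (Fin n) (Fin n) ℂ)
    (hL₁ : L₁.PosDef) (hL₂ : L₂.PosDef) (hle : (L₂ - L₁).PosSemidef) :
    embedNorm (weight L₁ 0) (weight L₂ 0) =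
      ENNReal.ofReal ((L₁.det.re / L₂.det.re) ^ ((1 : ℝ) / 2)) := by
  obtain ⟨B, c, hc₀, hc₁, hB, hBC⟩ := exists_simultaneous_diagonalization hL₁ hL₂ hle
  have hdet₁ := norm_det_sq_mul_det_re hB
  have hdet₂ := norm_det_sq_mul_det_re hBC
  set C := B * diagonal fun i ↦ (c i : ℂ) with hC
  have hCmul (x : Fin n → ℂ) : C *ᵥ x = B *ᵥ ((fun i ↦ (c i : ℂ)) * x) := by
    rw [hC, ← mulVec_mulVec]
    congr 1
    ext i
    simp [mulVec_diagonal]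
  have hBdet : B.det ≠ 0 := fun h ↦ by simp [h] at hdet₁
  have hCdet : C.det ≠ 0 := fun h ↦ by simp [h] at hdet₂
  set q : ℝ := L₁.det.re / L₂.det.re with hq
  have hq_eq : ‖C.det‖ ^ 2 = q * ‖B.det‖ ^ 2 := by
    rw [hq, eq_div_of_mul_eq (right_ne_zero_of_mul_eq_one hdet₂) hdet₂, div_mul_eq_mul_div,
      mul_comm L₁.det.re, hdet₁]
  have hq_nonneg : 0 ≤ q := by
    have : 0 < ‖B.det‖ ^ 2 := by positivity
    exact nonneg_of_mul_nonneg_left (hq_eq ▸ by positivity) this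
  have hN₁ (f : (Fin n → ℂ) → ℂ) (hf : Continuous f) : HPhiNormSq (weight L₁ 0) f =
      ENNReal.ofReal (‖B.det‖ ^ 2) * HPhiNormSq (weight 1 0) fun x ↦ f (B *ᵥ x) := by
    rw [HPhiNormSq_eq_mul_comp_mulVec L₁ hBdet hf, hB]
  have hN₂ (f : (Fin n → ℂ) → ℂ) (hf : Continuous f) : HPhiNormSq (weight L₂ 0) f =
      ENNReal.ofReal q * (ENNReal.ofReal (‖B.det‖ ^ 2) *
        HPhiNormSq (weight 1 0) fun x ↦ f (C *ᵥ x)) := by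
    rw [HPhiNormSq_eq_mul_comp_mulVec L₂ hCdet hf, hBC, hq_eq, ENNReal.ofReal_mul hq_nonneg,
      mul_assoc]
  rw [← ENNReal.ofReal_rpow_of_nonneg hq_nonneg (by norm_num)]
  apply le_antisymm
  · refine iSup_le fun ⟨f, hf, _, _⟩ ↦ ENNReal.div_le_of_le_mul ?_
    simp only [HPhiNorm]
    rw [← ENNReal.mul_rpow_of_nonneg _ _ (by norm_num), hN₁ f hf.continuous,
      hN₂ f hf.continuous]
    gcongr
    simp_rw [hCmul]
    exact HPhiNormSq_weight_one_comp_mul_le (f := fun x ↦ f (B *ᵥ x))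
      (hf.comp (LinearMap.toContinuousLinearMap (toLin' B)).differentiable)
      (fun i ↦ (hc₀ i).le) hc₁
  · have hone := hN₁ (fun _ ↦ 1) continuous_const
    have hpos : 0 < HPhiNorm (weight L₁ 0) fun _ ↦ 1 :=
      ENNReal.rpow_pos_of_nonneg (pos_iff_ne_zero.2 (HPhiNormSq_one_ne_zero L₁)) (by norm_num)
    have htop : HPhiNorm (weight L₁ 0) (fun _ ↦ 1) ≠ ⊤ := by
      refine ENNReal.rpow_ne_top_of_nonneg (by norm_num) ?_
      rw [hone]
      exact ENNReal.mul_ne_top ENNReal.ofReal_ne_top HPhiNormSq_weight_one_one_ne_top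
    refine le_iSup_of_le ⟨fun _ ↦ 1, differentiable_const _, hpos, htop⟩ ?_
    rw [ENNReal.le_div_iff_mul_le (.inl hpos.ne') (.inl htop)]
    simp only [HPhiNorm]
    rw [← ENNReal.mul_rpow_of_nonneg _ _ (by norm_num), hone, hN₂ _ continuous_const]

end
end

section
/- Let L₁, L₂ be n×n positive definite Hermitian matrices with L₂ − L₁ positive definite, and set Φ_j(x) = (1/2) L_j x·x̄ for j = 1, 2. Then the constant function 1 attains the norm of the embedding H_{Φ₁} → H_{Φ₂}: ‖1‖_{H_{Φ₂}} / ‖1‖_{H_{Φ₁}} = sup{‖f‖_{H_{Φ₂}}/‖f‖_{H_{Φ₁}} : f entire on ℂⁿ, 0 < ‖f‖_{H_{Φ₁}} < ∞} = (det L₁ / det L₂)^{1/2}. -/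
open MeasureTheory Real Matrix
open scoped ENNReal ComplexOrder

noncomputable section

/-- The real part of the sesquilinear form `x ↦ L x · x̄`. -/
def hermForm {n : ℕ} (L : Matrix (Fin n) (Fin n) ℂ) (x : Fin n → ℂ) : ℝ :=
  (star x ⬝ᵥ L *ᵥ x).re

/-- The Gaussian `x ↦ exp (-2π L x · x̄)`, valued in `[0,∞]`. -/
def gaussianDensity {n : ℕ} (L : Matrix (Fin n) (Fin n) ℂ) (x : Fin n → ℂ) : ℝ≥0∞ :=
  ENNReal.ofReal (Real.exp (-(2 * π) * hermForm L x))

lemma continuous_hermForm {n : ℕ} (L : Matrix (Fin n) (Fin n) ℂ) : Continuous (hermForm L) := by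
  unfold hermForm
  fun_prop

lemma measurable_gaussianDensity {n : ℕ} (L : Matrix (Fin n) (Fin n) ℂ) :
    Measurable (gaussianDensity L) :=
  ((Real.continuous_exp.comp
    (continuous_const.mul (continuous_hermForm L))).measurable).ennreal_ofReal

lemma HPhiNormSq_weight {n : ℕ} (L : Matrix (Fin n) (Fin n) ℂ) (f : (Fin n → ℂ) → ℂ) :
    HPhiNormSq (weight L 0) f = ∫⁻ x, ‖f x‖ₑ ^ 2 * gaussianDensity L x := by
  unfold HPhiNormSq
  congr 1 with x
  rw [ENNReal.ofReal_mul (by positivity), ENNReal.ofReal_pow (norm_nonneg _), ofReal_norm,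
    gaussianDensity]
  have h : dotC (L *ᵥ x) (star x) = star x ⬝ᵥ L *ᵥ x := by
    rw [dotProduct_comm]; rfl
  have hw : -4 * π * weight L 0 x = -(2 * π) * hermForm L x := by
    simp only [weight, h, hermForm]
    simp [dotC]
    ring
  rw [hw]

/-- A complex-linear change of variables scales Lebesgue measure by `|det|²`. -/
lemma lintegral_comp_mulVec {n : ℕ} {B : Matrix (Fin n) (Fin n) ℂ} (hB : B.det ≠ 0)
    {g : (Fin n → ℂ) → ℝ≥0∞} (hg : Measurable g) :
    ∫⁻ x, g (B *ᵥ x) = ENNReal.ofReal ((Complex.normSq B.det)⁻¹) * ∫⁻ x, g x := by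
  set T : (Fin n → ℂ) →ₗ[ℝ] (Fin n → ℂ) := (Matrix.toLin' B).restrictScalars ℝ with hT
  have hdet : LinearMap.det T = Complex.normSq B.det := by
    rw [hT, LinearMap.det_restrictScalars, LinearMap.det_toLin', Algebra.norm_complex_apply]
  have hne : LinearMap.det T ≠ 0 := by
    rw [hdet]; simpa using hB
  have hTm : Measurable T := (LinearMap.continuous_of_finiteDimensional T).measurable
  have h := Measure.map_linearMap_addHaar_eq_smul_addHaar (volume : Measure (Fin n → ℂ)) hne
  calc ∫⁻ x, g (B *ᵥ x) = ∫⁻ x, g (T x) := rfl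
    _ = ∫⁻ x, g x ∂(Measure.map T volume) := (lintegral_map hg hTm).symm
    _ = _ := by
      rw [h, lintegral_smul_measure, hdet, abs_of_nonneg (inv_nonneg.2 (Complex.normSq_nonneg _))]
      rfl

lemma hermForm_conjTranspose_mul_mul {n : ℕ} (L B : Matrix (Fin n) (Fin n) ℂ) (x : Fin n → ℂ) :
    hermForm (Bᴴ * L * B) x = hermForm L (B *ᵥ x) := by
  simp only [hermForm, star_mulVec, ← mulVec_mulVec, dotProduct_mulVec, vecMul_vecMul,
    Matrix.mul_assoc]

lemma hermForm_one {n : ℕ} (x : Fin n → ℂ) :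
    hermForm (1 : Matrix (Fin n) (Fin n) ℂ) x = ∑ i, ‖x i‖ ^ 2 := by
  simp only [hermForm, one_mulVec, dotProduct, Complex.re_sum, Pi.star_apply, RCLike.star_def]
  refine Finset.sum_congr rfl fun i _ => ?_
  rw [mul_comm, Complex.mul_conj, Complex.ofReal_re, Complex.normSq_eq_norm_sq]

lemma lintegral_gaussianDensity_one_ne_top (n : ℕ) :
    ∫⁻ x, gaussianDensity (1 : Matrix (Fin n) (Fin n) ℂ) x ≠ ⊤ := by
  have h1 : Integrable (fun z : ℂ => Real.exp (-(2 * π) * ‖z‖ ^ 2)) := by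
    have := (GaussianFourier.integrable_cexp_neg_mul_sq_norm_add (V := ℂ) (b := ((2 * π : ℝ) : ℂ))
      (by simpa using pi_pos) 0 0).norm
    refine this.congr (Filter.Eventually.of_forall fun z => ?_)
    simp only [Complex.norm_exp]
    congr 1
    norm_cast
    simp
  have h2 : Integrable (fun x : Fin n → ℂ => ∏ i, Real.exp (-(2 * π) * ‖x i‖ ^ 2)) :=
    Integrable.fintype_prod (f := fun _ z => Real.exp (-(2 * π) * ‖z‖ ^ 2)) fun _ => h1
  have h3 : ∀ x : Fin n → ℂ, Real.exp (-(2 * π) * hermForm 1 x) =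
      ∏ i, Real.exp (-(2 * π) * ‖x i‖ ^ 2) := fun x => by
    rw [hermForm_one, Finset.mul_sum, Real.exp_sum]
  simp only [gaussianDensity, h3]
  exact h2.lintegral_lt_top.ne

lemma lintegral_gaussianDensity_ne_zero {n : ℕ} (L : Matrix (Fin n) (Fin n) ℂ) :
    ∫⁻ x, gaussianDensity L x ≠ 0 := by
  rw [Ne, lintegral_eq_zero_iff (measurable_gaussianDensity L)]
  intro h
  obtain ⟨x, hx⟩ := h.exists
  simp only [gaussianDensity, Pi.zero_apply, ENNReal.ofReal_eq_zero] at hx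
  exact absurd (Real.exp_pos _) (not_lt.2 hx)

open scoped MatrixOrder in
/-- The Gaussian integral of a positive definite form is inversely proportional to its
determinant. -/
lemma lintegral_gaussianDensity {n : ℕ} {L : Matrix (Fin n) (Fin n) ℂ} (hL : L.PosDef) :
    ∫⁻ x, gaussianDensity L x =
      ENNReal.ofReal (L.det.re⁻¹) * ∫⁻ x, gaussianDensity (1 : Matrix (Fin n) (Fin n) ℂ) x := by
  obtain ⟨B, hB⟩ := CStarAlgebra.nonneg_iff_eq_star_mul_self.mp hL.posSemidef.nonneg
  rw [star_eq_conjTranspose] at hB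
  have hd : L.det = (Complex.normSq B.det : ℂ) := by
    rw [hB, det_mul, det_conjTranspose, RCLike.star_def, mul_comm, Complex.mul_conj]
  have hB0 : B.det ≠ 0 := by
    rintro h
    exact hL.det_pos.ne' (by simp [hd, h])
  rw [hd, Complex.ofReal_re, ← lintegral_comp_mulVec hB0 (measurable_gaussianDensity 1)]
  congr 1 with x
  rw [gaussianDensity, gaussianDensity, ← hermForm_conjTranspose_mul_mul, Matrix.mul_one, ← hB]

lemma lintegral_gaussianDensity_ne_top {n : ℕ} {L : Matrix (Fin n) (Fin n) ℂ} (hL : L.PosDef) :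
    ∫⁻ x, gaussianDensity L x ≠ ⊤ := by
  rw [lintegral_gaussianDensity hL]
  exact ENNReal.mul_ne_top ENNReal.ofReal_ne_top (lintegral_gaussianDensity_one_ne_top n)

lemma hermForm_sub {n : ℕ} {L : Matrix (Fin n) (Fin n) ℂ} (hL : L.IsHermitian)
    (x y : Fin n → ℂ) :
    hermForm L (x - y) = hermForm L x - 2 * (star x ⬝ᵥ L *ᵥ y).re + hermForm L y := by
  have h : (star y ⬝ᵥ L *ᵥ x).re = (star x ⬝ᵥ L *ᵥ y).re := by
    rw [← Complex.conj_re, ← RCLike.star_def, star_dotProduct, star_mulVec, star_star,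
      ← dotProduct_mulVec, hL.eq]
  simp only [hermForm, star_sub, mulVec_sub, sub_dotProduct, dotProduct_sub, Complex.sub_re]
  linarith

/-- Completing the square: the Gaussian of `L₁` is the convolution of that of `L₂` with a
Gaussian in `z`. -/
lemma hermForm_add_hermForm_sub {n : ℕ} {L₁ L₂ Q : Matrix (Fin n) (Fin n) ℂ}
    (hL₂ : L₂.IsHermitian) (hD : (L₂ - L₁).IsHermitian) (hQ : (L₂ - L₁) * Q = L₂)
    (u z : Fin n → ℂ) :
    hermForm L₁ u + hermForm (L₂ - L₁) (u - Q *ᵥ z) =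
      hermForm L₂ (u - z) + (hermForm (L₂ - L₁) (Q *ᵥ z) - hermForm L₂ z) := by
  have h : hermForm (L₂ - L₁) u = hermForm L₂ u - hermForm L₁ u := by
    simp [hermForm, sub_mulVec]
  rw [hermForm_sub hL₂, hermForm_sub hD, mulVec_mulVec, hQ, h]
  ring

/-- The value of an entire function squared is dominated by its mean over circles. -/
lemma enorm_sq_le_lintegral_circle {h : ℂ → ℂ} (hh : Differentiable ℂ h) :
    ‖h 0‖ₑ ^ 2 * volume (Set.Ioc 0 (2 * π)) ≤
      ∫⁻ θ in Set.Ioc 0 (2 * π), ‖h (Complex.exp (θ * Complex.I))‖ₑ ^ 2 := by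
  have h1 : Real.circleAverage (fun w => h w ^ 2) 0 1 = h 0 ^ 2 :=
    DiffContOnCl.circleAverage (hh.pow 2).diffContOnCl
  rw [Real.circleAverage_def, intervalIntegral.integral_of_le (by positivity)] at h1
  have h2 : ∫ θ in Set.Ioc 0 (2 * π), h (Complex.exp (θ * Complex.I)) ^ 2 =
      (2 * π : ℝ) • h 0 ^ 2 := by
    rw [← h1, smul_inv_smul₀ (by positivity)]
    simp [circleMap]
  calc ‖h 0‖ₑ ^ 2 * volume (Set.Ioc 0 (2 * π)) = ‖(2 * π : ℝ) • h 0 ^ 2‖ₑ := by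
        rw [enorm_smul, enorm_pow, Real.volume_Ioc, sub_zero,
          Real.enorm_of_nonneg (by positivity), mul_comm]
    _ ≤ _ := by
        rw [← h2]
        exact (enorm_integral_le_lintegral_enorm _).trans_eq
          (lintegral_congr fun θ => enorm_pow _ _)

/-- Mean value inequality against a circularly symmetric density. -/
lemma enorm_sq_mul_lintegral_le {n : ℕ} {f : (Fin n → ℂ) → ℂ} (hf : Differentiable ℂ f)
    {ρ : (Fin n → ℂ) → ℝ≥0∞} (hρ : Measurable ρ)
    (hrot : ∀ (θ : ℝ) z, ρ (Complex.exp (θ * Complex.I) • z) = ρ z) (x : Fin n → ℂ) :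
    ‖f x‖ₑ ^ 2 * ∫⁻ z, ρ z ≤ ∫⁻ z, ‖f (x + z)‖ₑ ^ 2 * ρ z := by
  have hfc : Continuous f := hf.continuous
  have hfm : Measurable f := hfc.measurable
  have hrotint (θ : ℝ) : ∫⁻ z, ‖f (x + z)‖ₑ ^ 2 * ρ z =
      ∫⁻ z, ‖f (x + Complex.exp (θ * Complex.I) • z)‖ₑ ^ 2 * ρ z := by
    have hdet : Complex.normSq
        (Complex.exp (θ * Complex.I) • (1 : Matrix (Fin n) (Fin n) ℂ)).det = 1 := by
      simp [Complex.normSq_eq_norm_sq, Complex.norm_exp_ofReal_mul_I]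
    have h := lintegral_comp_mulVec
      (B := Complex.exp (θ * Complex.I) • (1 : Matrix (Fin n) (Fin n) ℂ))
      (g := fun z => ‖f (x + z)‖ₑ ^ 2 * ρ z) (fun h0 => by simp [h0] at hdet) (by fun_prop)
    rw [hdet] at h
    simpa [smul_mulVec, hrot] using h.symm
  set V := volume (Set.Ioc 0 (2 * π)) with hV
  have hV0 : V ≠ 0 := by simp [hV, pi_pos]
  have hVt : V ≠ ⊤ := measure_Ioc_lt_top.ne
  refine (ENNReal.mul_le_mul_iff_left hV0 hVt).1 ?_
  calc ‖f x‖ₑ ^ 2 * (∫⁻ z, ρ z) * V = ∫⁻ z, ‖f x‖ₑ ^ 2 * V * ρ z := by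
        rw [lintegral_const_mul _ hρ]; ring
    _ ≤ ∫⁻ z, (∫⁻ θ : ℝ in Set.Ioc 0 (2 * π),
          ‖f (x + Complex.exp (θ * Complex.I) • z)‖ₑ ^ 2) * ρ z := by
        refine lintegral_mono fun z => mul_le_mul_left ?_ _
        simpa [-Real.volume_Ioc] using enorm_sq_le_lintegral_circle (h := fun w => f (x + w • z)) (by fun_prop)
    _ = ∫⁻ z, ∫⁻ θ : ℝ in Set.Ioc 0 (2 * π),
          ‖f (x + Complex.exp (θ * Complex.I) • z)‖ₑ ^ 2 * ρ z := by
        refine lintegral_congr fun z => (lintegral_mul_const _ ?_).symm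
        fun_prop
    _ = ∫⁻ θ : ℝ in Set.Ioc 0 (2 * π), ∫⁻ z,
          ‖f (x + Complex.exp (θ * Complex.I) • z)‖ₑ ^ 2 * ρ z := by
        refine lintegral_lintegral_swap (Measurable.aemeasurable ?_)
        refine Measurable.mul ?_ (hρ.comp measurable_fst)
        refine Measurable.pow_const (Measurable.enorm (Continuous.measurable ?_)) 2
        fun_prop
    _ = (∫⁻ z, ‖f (x + z)‖ₑ ^ 2 * ρ z) * V := by
        simp_rw [← hrotint]
        rw [setLIntegral_const]

/-- The `L₁`-Gaussian integral as an iterated integral over an `L₂`-Gaussian and a circularly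
symmetric density. -/
lemma lintegral_mul_gaussianDensity_mul {n : ℕ} {L₁ L₂ Q : Matrix (Fin n) (Fin n) ℂ}
    (hL₂ : L₂.IsHermitian) (hD : (L₂ - L₁).IsHermitian) (hQ : (L₂ - L₁) * Q = L₂)
    (hQ0 : Q.det ≠ 0) {ρ : (Fin n → ℂ) → ℝ≥0∞} (hρ : Measurable ρ)
    (hρ_eq : ∀ z, ρ z = ENNReal.ofReal
      (Real.exp (-(2 * π) * (hermForm (L₂ - L₁) (Q *ᵥ z) - hermForm L₂ z))))
    {g : (Fin n → ℂ) → ℝ≥0∞} (hg : Measurable g) :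
    (∫⁻ u, g u * gaussianDensity L₁ u) * ∫⁻ z, gaussianDensity (L₂ - L₁) (Q *ᵥ z) =
      ∫⁻ x, (∫⁻ z, g (x + z) * ρ z) * gaussianDensity L₂ x := by
  have hm₁ := measurable_gaussianDensity L₁
  have hm₂ := measurable_gaussianDensity L₂
  have hmD := measurable_gaussianDensity (L₂ - L₁)
  have hQm : Measurable fun z : Fin n → ℂ => Q *ᵥ z :=
    Continuous.measurable (by fun_prop)
  have hneg (L : Matrix (Fin n) (Fin n) ℂ) (v : Fin n → ℂ) : hermForm L (-v) = hermForm L v := by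
    simp [hermForm, mulVec_neg]
  have hshift (u : Fin n → ℂ) : ∫⁻ z, gaussianDensity (L₂ - L₁) (Q *ᵥ z) =
      ∫⁻ z, gaussianDensity (L₂ - L₁) (u - Q *ᵥ z) := by
    rw [← lintegral_sub_right_eq_self
      (fun z => gaussianDensity (L₂ - L₁) (Q *ᵥ z)) (Q⁻¹ *ᵥ u)]
    refine lintegral_congr fun z => ?_
    rw [mulVec_sub, mulVec_mulVec, Matrix.mul_nonsing_inv _ (Ne.isUnit hQ0), one_mulVec,
      gaussianDensity, gaussianDensity, ← hneg, neg_sub]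
  have hsq (u z : Fin n → ℂ) :
      gaussianDensity L₁ u * gaussianDensity (L₂ - L₁) (u - Q *ᵥ z) =
        ρ z * gaussianDensity L₂ (u - z) := by
    rw [hρ_eq, gaussianDensity, gaussianDensity, gaussianDensity,
      ← ENNReal.ofReal_mul (Real.exp_nonneg _), ← ENNReal.ofReal_mul (Real.exp_nonneg _),
      ← Real.exp_add, ← Real.exp_add, ← mul_add, ← mul_add,
      hermForm_add_hermForm_sub hL₂ hD hQ, add_comm]
  calc (∫⁻ u, g u * gaussianDensity L₁ u) * ∫⁻ z, gaussianDensity (L₂ - L₁) (Q *ᵥ z)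
      = ∫⁻ u, ∫⁻ z, g u * ρ z * gaussianDensity L₂ (u - z) := by
        rw [← lintegral_mul_const _ (by fun_prop)]
        refine lintegral_congr fun u => ?_
        rw [hshift u, ← lintegral_const_mul _ (by fun_prop)]
        refine lintegral_congr fun z => ?_
        rw [mul_assoc, hsq, mul_assoc]
    _ = ∫⁻ z, ∫⁻ u, g u * ρ z * gaussianDensity L₂ (u - z) := by
        refine lintegral_lintegral_swap (Measurable.aemeasurable ?_)
        exact ((hg.comp measurable_fst).mul (hρ.comp measurable_snd)).mul
          (hm₂.comp (measurable_fst.sub measurable_snd))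
    _ = ∫⁻ z, ∫⁻ x, g (x + z) * ρ z * gaussianDensity L₂ x := by
        refine lintegral_congr fun z => ?_
        rw [← lintegral_add_right_eq_self _ z]
        simp
    _ = ∫⁻ x, ∫⁻ z, g (x + z) * ρ z * gaussianDensity L₂ x := by
        refine lintegral_lintegral_swap (Measurable.aemeasurable ?_)
        exact ((hg.comp (measurable_snd.add measurable_fst)).mul (hρ.comp measurable_fst)).mul
          (hm₂.comp measurable_snd)
    _ = _ := by
        refine lintegral_congr fun x => lintegral_mul_const _ ?_
        exact (hg.comp (measurable_const_add x)).mul hρ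

/-- Among entire functions, constants maximize the ratio of the weighted integrals. -/
lemma lintegral_enorm_sq_mul_le {n : ℕ} {L₁ L₂ : Matrix (Fin n) (Fin n) ℂ}
    (hL₂ : L₂.PosDef) (hlt : (L₂ - L₁).PosDef)
    {f : (Fin n → ℂ) → ℂ} (hf : Differentiable ℂ f) :
    (∫⁻ x, ‖f x‖ₑ ^ 2 * gaussianDensity L₂ x) * ∫⁻ x, gaussianDensity L₁ x ≤
      (∫⁻ x, ‖f x‖ₑ ^ 2 * gaussianDensity L₁ x) * ∫⁻ x, gaussianDensity L₂ x := by
  have hDdet : IsUnit (L₂ - L₁).det := hlt.det_pos.ne'.isUnit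
  set Q := (L₂ - L₁)⁻¹ * L₂ with hQdef
  have hQ : (L₂ - L₁) * Q = L₂ := Matrix.mul_nonsing_inv_cancel_left _ _ hDdet
  have hQ0 : Q.det ≠ 0 := by
    intro h
    have := congrArg Matrix.det hQ
    rw [det_mul, h, mul_zero] at this
    exact hL₂.det_pos.ne this
  set ρ : (Fin n → ℂ) → ℝ≥0∞ := fun z => ENNReal.ofReal
    (Real.exp (-(2 * π) * (hermForm (L₂ - L₁) (Q *ᵥ z) - hermForm L₂ z))) with hρdef
  have hρ : Measurable ρ := by
    have h₁ := continuous_hermForm (L₂ - L₁)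
    have h₂ := continuous_hermForm L₂
    exact (Continuous.measurable (by fun_prop)).ennreal_ofReal
  have hrotForm (L : Matrix (Fin n) (Fin n) ℂ) (θ : ℝ) (z : Fin n → ℂ) :
      hermForm L (Complex.exp (θ * Complex.I) • z) = hermForm L z := by
    have h : Complex.exp (θ * Complex.I) * star (Complex.exp (θ * Complex.I)) = 1 := by
      rw [RCLike.star_def, Complex.mul_conj, Complex.normSq_eq_norm_sq,
        Complex.norm_exp_ofReal_mul_I]
      simp
    rw [hermForm, mulVec_smul, star_smul, smul_dotProduct, dotProduct_smul, smul_smul, mul_comm, h,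
      one_smul, hermForm]
  have hρrot (θ : ℝ) (z : Fin n → ℂ) : ρ (Complex.exp (θ * Complex.I) • z) = ρ z := by
    simp only [hρdef, mulVec_smul, hrotForm]
  have key {g : (Fin n → ℂ) → ℝ≥0∞} (hg : Measurable g) :=
    lintegral_mul_gaussianDensity_mul hL₂.1 hlt.1 hQ hQ0 hρ (fun _ => rfl) hg
  have hone := key (g := fun _ => 1) measurable_const
  simp only [one_mul] at hone
  rw [lintegral_const_mul _ (measurable_gaussianDensity L₂)] at hone
  have hfun := key (g := fun x => ‖f x‖ₑ ^ 2)
    (Continuous.measurable (by have := hf.continuous; fun_prop))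
  have hle : (∫⁻ x, ‖f x‖ₑ ^ 2 * gaussianDensity L₂ x) * ∫⁻ z, ρ z ≤
      (∫⁻ x, ‖f x‖ₑ ^ 2 * gaussianDensity L₁ x) *
        ∫⁻ z, gaussianDensity (L₂ - L₁) (Q *ᵥ z) := by
    have hfm : Measurable f := hf.continuous.measurable
    have hm₂ := measurable_gaussianDensity L₂
    rw [hfun, ← lintegral_mul_const _ (by fun_prop)]
    refine lintegral_mono fun x => ?_
    rw [mul_right_comm]
    exact mul_le_mul_left (enorm_sq_mul_lintegral_le hf hρ hρrot x) _
  have hK := lintegral_comp_mulVec hQ0 (measurable_gaussianDensity (L₂ - L₁))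
  set K := ∫⁻ z, gaussianDensity (L₂ - L₁) (Q *ᵥ z)
  have hK0 : K ≠ 0 := by
    rw [hK]
    refine mul_ne_zero ?_ (lintegral_gaussianDensity_ne_zero _)
    simpa using hQ0
  have hKt : K ≠ ⊤ := by
    rw [hK]
    exact ENNReal.mul_ne_top ENNReal.ofReal_ne_top (lintegral_gaussianDensity_ne_top hlt)
  refine (ENNReal.mul_le_mul_iff_left hK0 hKt).1 ?_
  rw [mul_assoc, hone, ← mul_assoc, mul_right_comm _ _ K]
  exact mul_le_mul_left hle _

/-- the constant function 1 attains the embedding norm for Levi weights. -/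
theorem constant_attains_norm (n : ℕ) (L₁ L₂ : Matrix (Fin n) (Fin n) ℂ)
    (hL₁ : L₁.PosDef) (hL₂ : L₂.PosDef) (hlt : (L₂ - L₁).PosDef) :
    HPhiNorm (weight L₂ 0) (fun _ => 1) / HPhiNorm (weight L₁ 0) (fun _ => 1) =
        embedNorm (weight L₁ 0) (weight L₂ 0) ∧
      embedNorm (weight L₁ 0) (weight L₂ 0) =
        ENNReal.ofReal ((L₁.det.re / L₂.det.re) ^ ((1 : ℝ) / 2)) := by
  have hone (L : Matrix (Fin n) (Fin n) ℂ) :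
      HPhiNormSq (weight L 0) (fun _ => 1) = ∫⁻ x, gaussianDensity L x := by
    simp [HPhiNormSq_weight]
  have hdiv (f : (Fin n → ℂ) → ℂ) : HPhiNorm (weight L₂ 0) f / HPhiNorm (weight L₁ 0) f =
      (HPhiNormSq (weight L₂ 0) f / HPhiNormSq (weight L₁ 0) f) ^ (1 / 2 : ℝ) :=
    (ENNReal.div_rpow_of_nonneg _ _ (by norm_num)).symm
  have h0 := lintegral_gaussianDensity_ne_zero L₁
  have ht := lintegral_gaussianDensity_ne_top hL₁
  have hattain : HPhiNorm (weight L₂ 0) (fun _ => 1) / HPhiNorm (weight L₁ 0) (fun _ => 1) =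
      embedNorm (weight L₁ 0) (weight L₂ 0) := by
    refine le_antisymm ?_ (iSup_le fun ⟨f, hf, hpos, hfin⟩ => ?_)
    · refine le_iSup_of_le ⟨fun _ => 1, differentiable_const _, ?_, ?_⟩ le_rfl
      · rw [HPhiNorm, hone]
        exact ENNReal.rpow_pos (pos_iff_ne_zero.2 h0) ht
      · rw [HPhiNorm, hone]
        exact ENNReal.rpow_ne_top_of_nonneg (by norm_num) ht
    · rw [hdiv, hdiv, hone, hone]
      refine ENNReal.rpow_le_rpow ?_ (by norm_num)
      have hB0 : HPhiNormSq (weight L₁ 0) f ≠ 0 := fun h => by simp [HPhiNorm, h] at hpos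
      have hBt : HPhiNormSq (weight L₁ 0) f ≠ ⊤ := fun h => by simp [HPhiNorm, h] at hfin
      rw [ENNReal.div_le_iff hB0 hBt, ← ENNReal.mul_div_right_comm,
        ENNReal.le_div_iff_mul_le (Or.inl h0) (Or.inl ht), HPhiNormSq_weight, HPhiNormSq_weight,
        mul_comm (∫⁻ x, gaussianDensity L₂ x)]
      exact lintegral_enorm_sq_mul_le hL₂ hlt hf
  refine ⟨hattain, ?_⟩
  have hd₁ : 0 < L₁.det.re := (Complex.lt_def.1 hL₁.det_pos).1
  have hd₂ : 0 < L₂.det.re := (Complex.lt_def.1 hL₂.det_pos).1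
  rw [← hattain, hdiv, hone, hone, ← ENNReal.ofReal_rpow_of_nonneg (by positivity) (by norm_num),
    lintegral_gaussianDensity hL₁, lintegral_gaussianDensity hL₂,
    ENNReal.mul_div_mul_right _ _ (lintegral_gaussianDensity_ne_zero _)
      (lintegral_gaussianDensity_one_ne_top n),
    ← ENNReal.ofReal_div_of_pos (inv_pos.2 hd₁)]
  congr 2
  field_simp

end
end
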